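/- Growth lemma in the unit ball. For every integer n ≥ 2, reals 0 < λ ≤ Λ, exponents q > n and p with n ≤ p ≤ q, d₀ ∈ (0,1/4], K > 0, and every ν > 0, there exist constants k > 0 and a > 0 such that the following holds. Let b, f : B₁ → ℝ be continuous with b ≥ 0, f ≥ 0, ‖b‖_{L^q(B₁)} ≤ K and ‖f‖_{L^p(B₁)} + ‖f‖_{L^q({x ∈ B₁ : 1−|x| < d₀})} ≤ a, and let u be a C² function on B₁ with u ≥ 0 and L⁻[u] ≤ f in B₁. If |{x ∈ B₁ : u(x) ≥ 1−|x|}| ≥ ν·|B₁|, then u(x) > k·(1−|x|) for all x ∈ B₁. -/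

import Mathlib

open MeasureTheory
open scoped ENNReal

/-- The Pucci minimal extremal operator `𝓜⁻(M)` with ellipticity constants `lam ≤ Lam`:
the infimum of `tr(A*M)` over symmetric matrices `A` with `lam•I ≤ A ≤ Lam•I`. -/
noncomputable def pucciMinus (n : ℕ) (lam Lam : ℝ) (M : Matrix (Fin n) (Fin n) ℝ) : ℝ :=
  sInf { t : ℝ | ∃ A : Matrix (Fin n) (Fin n) ℝ, A.IsSymm ∧
    (A - lam • (1 : Matrix (Fin n) (Fin n) ℝ)).PosSemidef ∧
    (Lam • (1 : Matrix (Fin n) (Fin n) ℝ) - A).PosSemidef ∧ t = (A * M).trace }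

/-- The Pucci maximal extremal operator `𝓜⁺(M)`. -/
noncomputable def pucciPlus (n : ℕ) (lam Lam : ℝ) (M : Matrix (Fin n) (Fin n) ℝ) : ℝ :=
  sSup { t : ℝ | ∃ A : Matrix (Fin n) (Fin n) ℝ, A.IsSymm ∧
    (A - lam • (1 : Matrix (Fin n) (Fin n) ℝ)).PosSemidef ∧
    (Lam • (1 : Matrix (Fin n) (Fin n) ℝ) - A).PosSemidef ∧ t = (A * M).trace }

/-- The Hessian matrix `D²u(x)` of `u` at `x`. -/
noncomputable def hess (n : ℕ) (u : EuclideanSpace ℝ (Fin n) → ℝ)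
    (x : EuclideanSpace ℝ (Fin n)) : Matrix (Fin n) (Fin n) ℝ :=
  fun i j => fderiv ℝ (fun y => fderiv ℝ u y (EuclideanSpace.single j (1 : ℝ))) x
    (EuclideanSpace.single i (1 : ℝ))

/-- The euclidean norm `|Du(x)|` of the gradient of `u` at `x`. -/
noncomputable def gradNorm (n : ℕ) (u : EuclideanSpace ℝ (Fin n) → ℝ)
    (x : EuclideanSpace ℝ (Fin n)) : ℝ := ‖fderiv ℝ u x‖

/-- The `L^p` norm `(∫_E |g|^p)^(1/p)`, as a Lebesgue integral valued in `[0,∞]`. -/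
noncomputable def LpNormE (n : ℕ) (p : ℝ) (g : EuclideanSpace ℝ (Fin n) → ℝ)
    (E : Set (EuclideanSpace ℝ (Fin n))) : ℝ≥0∞ :=
  (∫⁻ x in E, ENNReal.ofReal (|g x| ^ p)) ^ (1 / p)

/-- The last (`n`-th) coordinate `x_n` of a point of `ℝⁿ`. -/
def lastC (n : ℕ) (hn : 1 ≤ n) (x : EuclideanSpace ℝ (Fin n)) : ℝ := x ⟨n - 1, by omega⟩

/-- The open half-ball `B_R⁺ = {|x| < R, x_n > 0}`. -/
def halfBall (n : ℕ) (hn : 1 ≤ n) (R : ℝ) : Set (EuclideanSpace ℝ (Fin n)) :=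
  {x | ‖x‖ < R ∧ 0 < lastC n hn x}

/-- The flat boundary part `B_R⁰ = {|x| ≤ R, x_n = 0}`. -/
def flatB (n : ℕ) (hn : 1 ≤ n) (R : ℝ) : Set (EuclideanSpace ℝ (Fin n)) :=
  {x | ‖x‖ ≤ R ∧ lastC n hn x = 0}

/-- The norm `‖g‖_{L^{p,q}(B_R⁺)} = ‖g‖_{L^p(B_R⁺)} + ‖g‖_{L^q(B_R⁺ ∩ {x_n < d0})}`. -/
noncomputable def LpqNormHB (n : ℕ) (hn : 1 ≤ n) (p q d0 R : ℝ)
    (g : EuclideanSpace ℝ (Fin n) → ℝ) : ℝ≥0∞ :=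
  LpNormE n p g (halfBall n hn R) +
    LpNormE n q g {x ∈ halfBall n hn R | lastC n hn x < d0}

/-- The open cube `Q_ρ` of side `ρ` centered at `(0,…,0,ρ/2)`. -/
def cubeQ (n : ℕ) (hn : 1 ≤ n) (ρ : ℝ) : Set (EuclideanSpace ℝ (Fin n)) :=
  {x | (∀ i : Fin n, i.1 ≠ n - 1 → |x i| < ρ / 2) ∧ 0 < lastC n hn x ∧ lastC n hn x < ρ}

/-- The norm `‖g‖_{L^{p,q}(Q₂)} = ‖g‖_{L^p(Q₂)} + ‖g‖_{L^q(Q₂ ∩ {x_n < d0})}`. -/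
noncomputable def LpqNormQ (n : ℕ) (hn : 1 ≤ n) (p q d0 : ℝ)
    (g : EuclideanSpace ℝ (Fin n) → ℝ) : ℝ≥0∞ :=
  LpNormE n p g (cubeQ n hn 2) +
    LpNormE n q g {x ∈ cubeQ n hn 2 | lastC n hn x < d0}

/-- Admissible coefficient matrices. -/
def Adm (n : ℕ) (lam Lam : ℝ) (A : Matrix (Fin n) (Fin n) ℝ) : Prop :=
  A.IsSymm ∧ (A - lam • (1 : Matrix (Fin n) (Fin n) ℝ)).PosSemidef ∧
    (Lam • (1 : Matrix (Fin n) (Fin n) ℝ) - A).PosSemidef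

theorem trace_mul_psd_nonneg {n : ℕ} {Q P : Matrix (Fin n) (Fin n) ℝ}
    (hQ : Q.PosSemidef) (hP : P.PosSemidef) : 0 ≤ (Q * P).trace := by
  obtain ⟨m, v, rfl⟩ := Matrix.posSemidef_iff_eq_sum_vecMulVec.mp hP
  rw [Finset.mul_sum, Matrix.trace_sum]
  refine Finset.sum_nonneg fun i _ => ?_
  rw [Matrix.mul_vecMulVec, Matrix.trace_vecMulVec, dotProduct_comm]
  exact hQ.dotProduct_mulVec_nonneg (v i)

theorem adm_trace_mul {n : ℕ} {lam Lam : ℝ} {B P : Matrix (Fin n) (Fin n) ℝ}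
    (hB : Adm n lam Lam B) (hP : P.PosSemidef) : lam * P.trace ≤ (B * P).trace := by
  have h := trace_mul_psd_nonneg hB.2.1 hP
  rw [Matrix.sub_mul, Matrix.trace_sub, Matrix.smul_mul, Matrix.one_mul, Matrix.trace_smul] at h
  simp only [smul_eq_mul] at h
  linarith

theorem adm_trace_le {n : ℕ} {lam Lam : ℝ} {B : Matrix (Fin n) (Fin n) ℝ}
    (hB : Adm n lam Lam B) : B.trace ≤ Lam * n := by
  have h := hB.2.2.trace_nonneg
  rw [Matrix.trace_sub, Matrix.trace_smul, Matrix.trace_one] at h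
  simp only [smul_eq_mul, Fintype.card_fin] at h
  linarith

theorem adm_trace_ge {n : ℕ} {lam Lam : ℝ} {B : Matrix (Fin n) (Fin n) ℝ}
    (hB : Adm n lam Lam B) : lam * n ≤ B.trace := by
  have h := hB.2.1.trace_nonneg
  rw [Matrix.trace_sub, Matrix.trace_smul, Matrix.trace_one] at h
  simp only [smul_eq_mul, Fintype.card_fin] at h
  linarith

theorem det_le_of_psd {n : ℕ} (hn : 0 < n) {P : Matrix (Fin n) (Fin n) ℝ} (hP : P.PosSemidef) :
    P.det ≤ (P.trace / n) ^ n := by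
  have h1 := hP.1.det_eq_prod_eigenvalues
  have h2 := hP.1.trace_eq_sum_eigenvalues
  have hnn : (0 : ℝ) < n := by exact_mod_cast hn
  have hz : ∀ i ∈ Finset.univ, 0 ≤ hP.1.eigenvalues i := fun i _ => hP.eigenvalues_nonneg i
  have h3 := Real.geom_mean_le_arith_mean Finset.univ (fun _ => (1 : ℝ)) hP.1.eigenvalues
    (fun _ _ => zero_le_one) (by simpa using hnn) hz
  simp only [Real.rpow_one, Finset.sum_const, Finset.card_univ, Fintype.card_fin, nsmul_eq_mul,
    mul_one, one_mul] at h3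
  have h4 : P.det = ∏ i, hP.1.eigenvalues i := by simpa using h1
  have h5 : P.trace = ∑ i, hP.1.eigenvalues i := by simpa using h2
  rw [← h4, ← h5] at h3
  have h6 : 0 ≤ P.det := hP.det_nonneg
  calc P.det = (P.det ^ ((n : ℝ)⁻¹)) ^ n := by
        rw [← Real.rpow_natCast, ← Real.rpow_mul h6, inv_mul_cancel₀ hnn.ne', Real.rpow_one]
    _ ≤ _ := pow_le_pow_left₀ (Real.rpow_nonneg h6 _) h3 n

theorem adm_lam {n : ℕ} {lam Lam : ℝ} (hLam : lam ≤ Lam) :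
    Adm n lam Lam (lam • (1 : Matrix (Fin n) (Fin n) ℝ)) := by
  refine ⟨by simp [Matrix.IsSymm], by simpa using Matrix.PosSemidef.zero, ?_⟩
  rw [← sub_smul]
  exact Matrix.PosSemidef.one.smul (by linarith)

theorem trace_bound {n : ℕ} {lam Lam a g κ : ℝ} (hlam : 0 < lam) (hLam : lam ≤ Lam) (ha : 0 < a)
    {H HΦ P : Matrix (Fin n) (Fin n) ℝ} (hP : P.PosSemidef)
    (hPe : P = 1 + a⁻¹ • (H - HΦ))
    (hκ : ∀ B, Adm n lam Lam B → κ ≤ (B * HΦ).trace)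
    (hg : pucciMinus n lam Lam H ≤ g) :
    P.trace ≤ ((g - κ) / a + Lam * n) / lam := by
  have key : a * lam * P.trace - a * Lam * n + κ ≤ pucciMinus n lam Lam H := by
    refine le_csInf ⟨_, _, (adm_lam hLam).1, (adm_lam hLam).2.1, (adm_lam hLam).2.2, rfl⟩ ?_
    rintro t ⟨B, hB1, hB2, hB3, rfl⟩
    have hB : Adm n lam Lam B := ⟨hB1, hB2, hB3⟩
    have e : H = a • P - a • 1 + HΦ := by
      rw [hPe, smul_add, smul_smul, mul_inv_cancel₀ ha.ne', one_smul]; abel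
    have e2 : (B * H).trace = a * (B * P).trace - a * B.trace + (B * HΦ).trace := by
      conv_lhs => rw [e]
      rw [Matrix.mul_add, Matrix.mul_sub, Matrix.trace_add, Matrix.trace_sub]
      simp [Matrix.trace_smul]
    rw [e2]
    have h1 := adm_trace_mul hB hP
    have h2 := adm_trace_le hB
    have h3 := hκ B hB
    nlinarith
  rw [le_div_iff₀ hlam]
  have : a * (P.trace * lam) ≤ a * ((g - κ) / a + Lam * n) := by
    rw [mul_add, mul_div_cancel₀ _ ha.ne']; linarith
  exact le_of_mul_le_mul_left this ha

/-- trace of admissible matrix against `c1 w⊗w + c2 I`. -/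
theorem adm_rankone {n : ℕ} {lam Lam : ℝ} {B : Matrix (Fin n) (Fin n) ℝ}
    (hB : Adm n lam Lam B) (w : Fin n → ℝ) :
    lam * ∑ i, w i ^ 2 ≤ (B * Matrix.of (fun i j => w i * w j)).trace := by
  have h := adm_trace_mul hB (Matrix.posSemidef_vecMulVec_self_star w)
  have e : Matrix.vecMulVec w (star w) = Matrix.of (fun i j => w i * w j) := by
    ext i j; simp [Matrix.vecMulVec_apply]
  rw [e] at h
  refine le_trans (le_of_eq ?_) h
  congr 1
  simp [Matrix.trace, pow_two]

theorem second_deriv_nonneg_of_min {ψ ψ' : ℝ → ℝ} {c : ℝ}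
    (h1 : ∀ᶠ s in nhds (0 : ℝ), HasDerivAt ψ (ψ' s) s) (h2 : HasDerivAt ψ' c 0)
    (hmin : IsLocalMin ψ 0) : 0 ≤ c := by
  by_contra hc
  push Not at hc
  have e : deriv ψ =ᶠ[nhds 0] ψ' := h1.mono fun s hs => hs.deriv
  have d2 : deriv (deriv ψ) 0 = c := by rw [e.deriv_eq]; exact h2.deriv
  have h0 : deriv ψ 0 = 0 := hmin.deriv_eq_zero
  have hmax := isLocalMax_of_deriv_deriv_neg (f := ψ) (x₀ := 0) (by rw [d2]; exact hc) h0
    h1.self_of_nhds.continuousAt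
  have hconst : ψ =ᶠ[nhds 0] fun _ => ψ 0 := by
    filter_upwards [hmin, hmax] with s a b using le_antisymm b a
  have hd : deriv ψ =ᶠ[nhds 0] fun _ => 0 := by
    have := hconst.deriv
    simpa using this
  have : deriv (deriv ψ) 0 = 0 := by rw [hd.deriv_eq]; simp
  linarith

theorem hess_apply {n : ℕ} {h : EuclideanSpace ℝ (Fin n) → ℝ} {x : EuclideanSpace ℝ (Fin n)}
    (hh : ContDiffAt ℝ 2 h x) (i j : Fin n) :
    hess n h x i j = fderiv ℝ (fderiv ℝ h) x (EuclideanSpace.single i 1)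
      (EuclideanSpace.single j 1) := by
  have hd : DifferentiableAt ℝ (fderiv ℝ h) x :=
    (hh.fderiv_right (m := 1) (by norm_num)).differentiableAt (by norm_num)
  unfold hess
  rw [(hd.hasFDerivAt.clm_apply (hasFDerivAt_const _ _)).fderiv]
  simp

theorem hess_symm {n : ℕ} {h : EuclideanSpace ℝ (Fin n) → ℝ} {x : EuclideanSpace ℝ (Fin n)}
    (hh : ContDiffAt ℝ 2 h x) (i j : Fin n) : hess n h x i j = hess n h x j i := by
  rw [hess_apply hh, hess_apply hh]
  exact (hh.isSymmSndFDerivAt (by simp)) _ _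

theorem hess_sub {n : ℕ} {u v : EuclideanSpace ℝ (Fin n) → ℝ} {x : EuclideanSpace ℝ (Fin n)}
    (hu : ContDiffAt ℝ 2 u x) (hv : ContDiffAt ℝ 2 v x) :
    hess n (u - v) x = hess n u x - hess n v x := by
  have hd : ∀ {w : EuclideanSpace ℝ (Fin n) → ℝ}, ContDiffAt ℝ 2 w x →
      DifferentiableAt ℝ (fderiv ℝ w) x := fun hw =>
    (hw.fderiv_right (m := 1) (by norm_num)).differentiableAt (by norm_num)
  ext i j
  rw [hess_apply (h := u - v) (hu.sub hv), Matrix.sub_apply, hess_apply hu, hess_apply hv]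
  have e : fderiv ℝ (u - v) =ᶠ[nhds x] fderiv ℝ u - fderiv ℝ v := by
    filter_upwards [hu.eventually (by simp), hv.eventually (by simp)] with y h1 h2
    rw [Pi.sub_apply, fderiv_sub (h1.differentiableAt (by norm_num))
      (h2.differentiableAt (by norm_num))]
  rw [e.fderiv_eq, fderiv_sub (hd hu) (hd hv)]
  simp

theorem psd_of_min {n : ℕ} {h : EuclideanSpace ℝ (Fin n) → ℝ} {x y : EuclideanSpace ℝ (Fin n)}
    {a : ℝ} (ha : 0 < a) (hh : ContDiffAt ℝ 2 h x)
    (hmin : IsLocalMin (fun z => h z + a / 2 * ‖z - y‖ ^ 2) x) :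
    (1 + a⁻¹ • hess n h x).PosSemidef ∧ fderiv ℝ h x = - a • innerSL ℝ (x - y) := by
  have hq : ∀ z : EuclideanSpace ℝ (Fin n), HasFDerivAt (fun z => a / 2 * ‖z - y‖ ^ 2)
      (a • innerSL ℝ (z - y)) z := by
    intro z
    have h1 : HasFDerivAt (fun z : EuclideanSpace ℝ (Fin n) => z - y)
      (ContinuousLinearMap.id ℝ _) z := (hasFDerivAt_id z).sub_const y
    have h2 := (h1.norm_sq).const_mul (a / 2)
    refine h2.congr_fderiv ?_
    ext v
    simp
    ring
  have hev : ∀ᶠ z in nhds x, HasFDerivAt (fun z => h z + a / 2 * ‖z - y‖ ^ 2)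
      (fderiv ℝ h z + a • innerSL ℝ (z - y)) z := by
    filter_upwards [hh.eventually (by simp)] with z hz
    exact (hz.differentiableAt (by norm_num)).hasFDerivAt.add (hq z)
  constructor
  · have hd : DifferentiableAt ℝ (fderiv ℝ h) x :=
      (hh.fderiv_right (m := 1) (by norm_num)).differentiableAt (by norm_num)
    have quad : ∀ v : EuclideanSpace ℝ (Fin n),
        0 ≤ fderiv ℝ (fderiv ℝ h) x v v + a * ‖v‖ ^ 2 := by
      intro v
      have hl : ∀ s : ℝ, HasDerivAt (fun s : ℝ => x + s • v) v s := by
        intro s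
        simpa using ((hasDerivAt_id s).smul_const v).const_add x
      have hl0 : Filter.Tendsto (fun s : ℝ => x + s • v) (nhds 0) (nhds x) := by
        have := (hl 0).continuousAt.tendsto
        simpa using this
      refine second_deriv_nonneg_of_min (ψ := fun s => h (x + s • v) + a / 2 * ‖x + s • v - y‖ ^ 2)
        (ψ' := fun s => (fderiv ℝ h (x + s • v) + a • innerSL ℝ (x + s • v - y)) v) ?_ ?_ ?_
      · filter_upwards [hl0.eventually hev] with s hs
        exact hs.comp_hasDerivAt s (hl s)
      · have h1 : HasDerivAt (fun s : ℝ => fderiv ℝ h (x + s • v)) (fderiv ℝ (fderiv ℝ h) x v) 0 := by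
          have : HasFDerivAt (fderiv ℝ h) (fderiv ℝ (fderiv ℝ h) x) (x + (0 : ℝ) • v) := by
            simpa using hd.hasFDerivAt
          exact this.comp_hasDerivAt 0 (hl 0)
        have h2 : HasDerivAt (fun s : ℝ => a * inner ℝ (x + s • v - y) v) (a * inner ℝ v v) 0 := by
          have := ((hl 0).sub_const y).inner ℝ (hasDerivAt_const (0 : ℝ) v)
          simpa using this.const_mul a
        have h3 := (h1.clm_apply (hasDerivAt_const (0 : ℝ) v)).add h2
        rw [← real_inner_self_eq_norm_sq]
        refine (h3.congr_deriv (by simp)).congr_of_eventuallyEq ?_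
        exact Filter.Eventually.of_forall fun s => by
          simp [inner_sub_left, inner_add_left, real_inner_smul_left]
      · have : IsLocalMin (fun z => h z + a / 2 * ‖z - y‖ ^ 2) (x + (0 : ℝ) • v) := by
          simpa using hmin
        exact this.comp_continuous (g := fun s : ℝ => x + s • v) (hl 0).continuousAt
    refine Matrix.PosSemidef.of_dotProduct_mulVec_nonneg ?_ ?_
    · ext i j
      simp [hess_symm hh i j, Matrix.one_apply, eq_comm]
    · intro w
      have e := quad (WithLp.toLp 2 w)
      have ew : (WithLp.toLp 2 w : EuclideanSpace ℝ (Fin n)) =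
          ∑ i, w i • EuclideanSpace.single i (1 : ℝ) := by
        ext j
        simp [Finset.sum_apply, Pi.single_apply]
      have e1 : fderiv ℝ (fderiv ℝ h) x (WithLp.toLp 2 w) (WithLp.toLp 2 w) =
          ∑ i, ∑ j, w i * (w j * hess n h x i j) := by
        rw [ew]
        simp only [map_sum, map_smul, sum_apply, smul_apply,
          smul_eq_mul, hess_apply hh, Finset.mul_sum]
        rw [Finset.sum_comm]
        refine Finset.sum_congr rfl fun i _ => Finset.sum_congr rfl fun j _ => by ring
      have e2 : ‖(WithLp.toLp 2 w : EuclideanSpace ℝ (Fin n))‖ ^ 2 = ∑ i, w i * w i := by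
        rw [EuclideanSpace.norm_sq_eq]
        simp [pow_two]
      have e3 : star w ⬝ᵥ (1 + a⁻¹ • hess n h x).mulVec w =
          a⁻¹ * (∑ i, ∑ j, w i * (w j * hess n h x i j)) + ∑ i, w i * w i := by
        rw [Matrix.add_mulVec, Matrix.one_mulVec, Matrix.smul_mulVec, dotProduct_add,
          dotProduct_smul]
        simp only [dotProduct, Matrix.mulVec, star_trivial, smul_eq_mul, Finset.mul_sum]
        rw [add_comm]
        congr 1
        refine Finset.sum_congr rfl fun i _ => Finset.sum_congr rfl fun j _ => by ring
      rw [e3]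
      rw [e1, e2] at e
      have : 0 ≤ a⁻¹ * ((∑ i, ∑ j, w i * (w j * hess n h x i j)) + a * ∑ i, w i * w i) := by
        positivity
      rw [mul_add, ← mul_assoc, inv_mul_cancel₀ ha.ne', one_mul] at this
      exact this
  · have := hmin.hasFDerivAt_eq_zero hev.self_of_nhds
    rw [neg_smul]
    exact eq_neg_of_add_eq_zero_left this

theorem isClosed_psd (n : ℕ) : IsClosed {P : Matrix (Fin n) (Fin n) ℝ | P.PosSemidef} := by
  have : {P : Matrix (Fin n) (Fin n) ℝ | P.PosSemidef} =
      {P | P.conjTranspose = P} ∩ ⋂ w : Fin n → ℝ, {P | 0 ≤ star w ⬝ᵥ P.mulVec w} := by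
    ext P
    simp only [Set.mem_ofPred_eq, Set.mem_inter_iff, Set.mem_iInter]
    rw [Matrix.posSemidef_iff_dotProduct_mulVec]
    rfl
  rw [this]
  refine (isClosed_eq (by fun_prop) (by fun_prop)).inter (isClosed_iInter fun w => ?_)
  refine isClosed_le (by fun_prop) ?_
  simp only [dotProduct, Matrix.mulVec]
  fun_prop

/-- vector of partial derivatives -/
noncomputable def gradV (n : ℕ) (h : EuclideanSpace ℝ (Fin n) → ℝ)
    (x : EuclideanSpace ℝ (Fin n)) : EuclideanSpace ℝ (Fin n) :=
  WithLp.toLp 2 (fun i => fderiv ℝ h x (EuclideanSpace.single i (1 : ℝ)))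

theorem hasFDerivAt_gradV {n : ℕ} {h : EuclideanSpace ℝ (Fin n) → ℝ}
    {x : EuclideanSpace ℝ (Fin n)} (hh : ContDiffAt ℝ 2 h x) :
    DifferentiableAt ℝ (gradV n h) x ∧
      ∀ v i, (fderiv ℝ (gradV n h) x v) i =
        fderiv ℝ (fderiv ℝ h) x v (EuclideanSpace.single i 1) := by
  have hd : DifferentiableAt ℝ (fderiv ℝ h) x :=
    (hh.fderiv_right (m := 1) (by norm_num)).differentiableAt (by norm_num)
  have hi : ∀ i, HasFDerivAt (fun y => (gradV n h y) i)
      ((ContinuousLinearMap.apply ℝ ℝ (EuclideanSpace.single i (1 : ℝ))).comp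
        (fderiv ℝ (fderiv ℝ h) x)) x := by
    intro i
    exact ((ContinuousLinearMap.apply ℝ ℝ (EuclideanSpace.single i (1 : ℝ))).hasFDerivAt).comp x
      hd.hasFDerivAt
  have hdiff : DifferentiableAt ℝ (gradV n h) x :=
    (differentiableAt_euclidean).2 fun i => (hi i).differentiableAt
  refine ⟨hdiff, fun v i => ?_⟩
  have h1 : HasFDerivAt (fun y => (gradV n h y) i)
      ((EuclideanSpace.proj i : EuclideanSpace ℝ (Fin n) →L[ℝ] ℝ).comp
        (fderiv ℝ (gradV n h) x)) x :=
    ((EuclideanSpace.proj i : EuclideanSpace ℝ (Fin n) →L[ℝ] ℝ).hasFDerivAt).comp x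
      hdiff.hasFDerivAt
  have := congrArg (fun L => L v) (h1.unique (hi i))
  simpa using this

theorem det_T {n : ℕ} {h : EuclideanSpace ℝ (Fin n) → ℝ}
    {x : EuclideanSpace ℝ (Fin n)} (hh : ContDiffAt ℝ 2 h x) (a : ℝ) :
    (ContinuousLinearMap.id ℝ (EuclideanSpace ℝ (Fin n)) +
      a⁻¹ • fderiv ℝ (gradV n h) x).det = (1 + a⁻¹ • hess n h x).det := by
  rw [ContinuousLinearMap.det,
    ← LinearMap.det_toMatrix (EuclideanSpace.basisFun (Fin n) ℝ).toBasis,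
    ← Matrix.det_transpose]
  congr 1
  ext i j
  rw [Matrix.transpose_apply, LinearMap.toMatrix_apply]
  simp only [OrthonormalBasis.coe_toBasis, EuclideanSpace.basisFun_apply,
    OrthonormalBasis.coe_toBasis_repr_apply, EuclideanSpace.basisFun_repr, Matrix.add_apply,
    Matrix.smul_apply, hess_apply hh, Matrix.one_apply]
  simp [(hasFDerivAt_gradV hh).2, eq_comm]

theorem key_lemma {n : ℕ} (hn : 0 < n) {lam Lam : ℝ} (hlam : 0 < lam) (hLam : lam ≤ Lam)
    {K U : Set (EuclideanSpace ℝ (Fin n))} (hK : IsCompact K) (hU : IsOpen U) (hUK : U ⊆ K)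
    {u Φ : EuclideanSpace ℝ (Fin n) → ℝ} (hu : ContDiffOn ℝ 2 u U) (hΦ : ContDiffOn ℝ 2 Φ U)
    (hc : ContinuousOn (u - Φ) K) {x0 : EuclideanSpace ℝ (Fin n)} (hx0 : x0 ∈ U)
    {a ρ D : ℝ} (ha : 0 < a) (hD : K ⊆ Metric.closedBall x0 D)
    (hgap : ∀ x ∈ K, x ∉ U → (u - Φ) x0 + a / 2 * ρ ^ 2 < (u - Φ) x)
    (g κ : EuclideanSpace ℝ (Fin n) → ℝ) (A : Set (EuclideanSpace ℝ (Fin n)))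
    (hA : ∀ x ∈ U, (u - Φ) x ≤ (u - Φ) x0 + a / 2 * ρ ^ 2 →
      ‖fderiv ℝ (u - Φ) x‖ ≤ a * (D + ρ) → x ∈ A)
    (hg : ∀ x ∈ U, x ∈ A → (u - Φ) x ≤ (u - Φ) x0 + a / 2 * ρ ^ 2 →
      ‖fderiv ℝ (u - Φ) x‖ ≤ a * (D + ρ) → pucciMinus n lam Lam (hess n u x) ≤ g x)
    (hκ : ∀ x ∈ U, x ∈ A → ∀ B, Adm n lam Lam B → κ x ≤ (B * hess n Φ x).trace) :
    volume (Metric.ball x0 ρ) ≤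
      ∫⁻ x in A, ENNReal.ofReal (((g x - κ x) / a + Lam * n) / (lam * n)) ^ n := by
  set h := u - Φ with hh
  have hcd : ∀ x ∈ U, ContDiffAt ℝ 2 h x := fun x hx =>
    (hu.contDiffAt (hU.mem_nhds hx)).sub (hΦ.contDiffAt (hU.mem_nhds hx))
  have hnn : (0 : ℝ) < n := by exact_mod_cast hn
  set A' : Set (EuclideanSpace ℝ (Fin n)) := {x | h x ≤ h x0 + a / 2 * ρ ^ 2 ∧
    ‖fderiv ℝ h x‖ ≤ a * (D + ρ) ∧ (1 + a⁻¹ • hess n h x).PosSemidef} ∩ U with hA'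
  have hmeas : MeasurableSet A' := by
    have hf2 : ContinuousOn (fderiv ℝ (fderiv ℝ h)) U := fun x hx =>
      (((hcd x hx).fderiv_right (m := 1) (by norm_num)).fderiv_right (m := 0)
        (by norm_num)).continuousAt.continuousWithinAt
    have hf1 : ContinuousOn (fderiv ℝ h) U := fun x hx =>
      ((hcd x hx).fderiv_right (m := 1) (by norm_num)).continuousAt.continuousWithinAt
    have hf0 : ContinuousOn h U := fun x hx => (hcd x hx).continuousAt.continuousWithinAt
    have hfh : ContinuousOn (hess n h) U := by
      refine continuousOn_pi.2 fun i => continuousOn_pi.2 fun j => ?_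
      have : ContinuousOn (fun x => fderiv ℝ (fderiv ℝ h) x (EuclideanSpace.single i 1)
        (EuclideanSpace.single j 1)) U :=
        (hf2.clm_apply continuousOn_const).clm_apply continuousOn_const
      exact this.congr fun x hx => hess_apply (hcd x hx) i j
    have hP : ContinuousOn (fun x => (1 + a⁻¹ • hess n h x : Matrix (Fin n) (Fin n) ℝ)) U :=
      continuousOn_const.add (by simpa using! hfh.const_smul a⁻¹)
    have hall : ContinuousOn (fun x => (h x, ‖fderiv ℝ h x‖,
      (1 + a⁻¹ • hess n h x : Matrix (Fin n) (Fin n) ℝ))) U := hf0.prodMk (hf1.norm.prodMk hP)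
    obtain ⟨C, hC, hCe⟩ := continuousOn_iff_isClosed.1 hall
      (Set.Iic (h x0 + a / 2 * ρ ^ 2) ×ˢ (Set.Iic (a * (D + ρ)) ×ˢ {P | P.PosSemidef}))
      (isClosed_Iic.prod (isClosed_Iic.prod (isClosed_psd n)))
    have : A' = C ∩ U := by
      rw [← hCe]; rfl
    rw [this]
    exact hC.measurableSet.inter hU.measurableSet
  have hAA : A' ⊆ A := fun x hx => hA x hx.2 hx.1.1 hx.1.2.1
  have hT : ∀ x ∈ A', HasFDerivWithinAt (fun x => x + a⁻¹ • gradV n h x)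
      (ContinuousLinearMap.id ℝ (EuclideanSpace ℝ (Fin n)) +
      a⁻¹ • fderiv ℝ (gradV n h) x) A' x := by
    intro x hx
    exact ((hasFDerivAt_id x).add
      ((hasFDerivAt_gradV (hcd x hx.2)).1.hasFDerivAt.const_smul a⁻¹)).hasFDerivWithinAt
  have himg : Metric.ball x0 ρ ⊆ (fun x => x + a⁻¹ • gradV n h x) '' (A') := by
    intro y hy
    rw [Metric.mem_ball] at hy
    have hcont : ContinuousOn (fun z => h z + a / 2 * ‖z - y‖ ^ 2) K :=
      hc.add (by fun_prop)
    obtain ⟨x, hxK, hxm⟩ := hK.exists_isMinOn ⟨x0, hUK hx0⟩ hcont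
    have h0 : h x + a / 2 * ‖x - y‖ ^ 2 ≤ h x0 + a / 2 * ‖x0 - y‖ ^ 2 := hxm (hUK hx0)
    have h1 : ‖x0 - y‖ ≤ ρ := by rw [← dist_eq_norm, dist_comm]; exact hy.le
    have h1' : a / 2 * ‖x0 - y‖ ^ 2 ≤ a / 2 * ρ ^ 2 := by gcongr
    have h2 : h x ≤ h x0 + a / 2 * ρ ^ 2 := by
      have : 0 ≤ a / 2 * ‖x - y‖ ^ 2 := by positivity
      linarith
    have hxU : x ∈ U := by
      by_contra hxU
      exact absurd (hgap x hxK hxU) (not_lt.2 h2)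
    have hloc : IsLocalMin (fun z => h z + a / 2 * ‖z - y‖ ^ 2) x :=
      hxm.isLocalMin (Filter.mem_of_superset (hU.mem_nhds hxU) hUK)
    obtain ⟨hpsd, hgrad⟩ := psd_of_min ha (hcd x hxU) hloc
    have h3 : ‖fderiv ℝ h x‖ ≤ a * (D + ρ) := by
      rw [hgrad, norm_smul, innerSL_apply_norm, norm_neg, Real.norm_of_nonneg ha.le]
      have hx1 : ‖x - x0‖ ≤ D := by
        have := hD hxK
        rwa [Metric.mem_closedBall, dist_eq_norm] at this
      have : ‖x - y‖ ≤ D + ρ := by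
        calc ‖x - y‖ = ‖(x - x0) + (x0 - y)‖ := by congr 1; abel
          _ ≤ _ := (norm_add_le _ _).trans (add_le_add hx1 h1)
      gcongr
    refine ⟨x, ⟨⟨h2, h3, hpsd⟩, hxU⟩, ?_⟩
    ext i
    simp only [gradV, hgrad]
    simp [EuclideanSpace.inner_single_right]
    field_simp
    ring
  calc volume (Metric.ball x0 ρ) ≤ volume ((fun x => x + a⁻¹ • gradV n h x) '' (A')) :=
        measure_mono himg
    _ ≤ ∫⁻ x in A', ENNReal.ofReal |(ContinuousLinearMap.id ℝ (EuclideanSpace ℝ (Fin n)) +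
      a⁻¹ • fderiv ℝ (gradV n h) x).det| :=
        addHaar_image_le_lintegral_abs_det_fderiv volume hmeas hT
    _ ≤ ∫⁻ x in A', ENNReal.ofReal (((g x - κ x) / a + Lam * n) / (lam * n)) ^ n := by
        refine setLIntegral_mono' hmeas fun x hx => ?_
        have hP := hx.1.2.2
        rw [det_T (hcd x hx.2), abs_of_nonneg hP.det_nonneg]
        have hb := trace_bound hlam hLam ha hP (by
          rw [hh, hess_sub (hu.contDiffAt (hU.mem_nhds hx.2)) (hΦ.contDiffAt (hU.mem_nhds hx.2))])
          (hκ x hx.2 (hAA hx)) (hg x hx.2 (hAA hx) hx.1.1 hx.1.2.1)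
        have h0 : 0 ≤ (1 + a⁻¹ • hess n h x).trace := hP.trace_nonneg
        have hb2 : (1 + a⁻¹ • hess n h x).trace / n ≤
            ((g x - κ x) / a + Lam * n) / (lam * n) := by
          rw [← div_div]; gcongr
        rw [← ENNReal.ofReal_pow ((div_nonneg h0 hnn.le).trans hb2)]
        refine ENNReal.ofReal_le_ofReal ((det_le_of_psd hn hP).trans ?_)
        gcongr
    _ ≤ _ := lintegral_mono_set hAA

theorem radial_fderiv {n : ℕ} {G G' : ℝ → ℝ} (hG : ∀ s, HasDerivAt G (G' s) s)
    (c x : EuclideanSpace ℝ (Fin n)) :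
    HasFDerivAt (fun y => G (‖y - c‖ ^ 2)) ((2 * G' (‖x - c‖ ^ 2)) • innerSL ℝ (x - c)) x := by
  have h1 : HasFDerivAt (fun z : EuclideanSpace ℝ (Fin n) => z - c)
      (ContinuousLinearMap.id ℝ _) x := (hasFDerivAt_id x).sub_const c
  have h2 := (hG (‖x - c‖ ^ 2)).comp_hasFDerivAt x h1.norm_sq
  refine h2.congr_fderiv ?_
  ext v
  simp
  ring

theorem radial_grad_norm {n : ℕ} {G G' : ℝ → ℝ} (hG : ∀ s, HasDerivAt G (G' s) s)
    (c x : EuclideanSpace ℝ (Fin n)) :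
    ‖fderiv ℝ (fun y => G (‖y - c‖ ^ 2)) x‖ = 2 * |G' (‖x - c‖ ^ 2)| * ‖x - c‖ := by
  rw [(radial_fderiv hG c x).fderiv, norm_smul, innerSL_apply_norm, Real.norm_eq_abs, abs_mul]
  simp

theorem radial_hess {n : ℕ} {G G' G'' : ℝ → ℝ} (hG : ∀ s, HasDerivAt G (G' s) s)
    (hG' : ∀ s, HasDerivAt G' (G'' s) s) (c x : EuclideanSpace ℝ (Fin n)) :
    hess n (fun y => G (‖y - c‖ ^ 2)) x =
      (4 * G'' (‖x - c‖ ^ 2)) • Matrix.of (fun i j => (x - c) i * (x - c) j) +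
        (2 * G' (‖x - c‖ ^ 2)) • (1 : Matrix (Fin n) (Fin n) ℝ) := by
  ext i j
  unfold hess
  have e : (fun y => fderiv ℝ (fun y => G (‖y - c‖ ^ 2)) y (EuclideanSpace.single j (1 : ℝ))) =
      fun y => 2 * G' (‖y - c‖ ^ 2) * (y j - c j) := by
    funext y
    rw [(radial_fderiv hG c y).fderiv]
    simp [inner_sub_left, EuclideanSpace.inner_single_right]
  rw [e]
  have h1 := (radial_fderiv hG' c x).const_mul 2
  have h2 : HasFDerivAt (fun y : EuclideanSpace ℝ (Fin n) => y j - c j)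
      (EuclideanSpace.proj j : EuclideanSpace ℝ (Fin n) →L[ℝ] ℝ) x :=
    ((EuclideanSpace.proj j : EuclideanSpace ℝ (Fin n) →L[ℝ] ℝ).hasFDerivAt).sub_const _
  have h3 := h1.mul h2
  have e2 : fderiv ℝ (fun y => 2 * G' (‖y - c‖ ^ 2) * (y j - c j)) x = _ := h3.fderiv
  rw [e2]
  simp [inner_sub_left, EuclideanSpace.inner_single_right, Matrix.one_apply, Pi.single_apply]
  rcases eq_or_ne i j with rfl | hij
  · simp; ring
  · simp [hij, Ne.symm hij]; ring

theorem adm_radial {n : ℕ} {lam Lam : ℝ} {B : Matrix (Fin n) (Fin n) ℝ}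
    (hB : Adm n lam Lam B) {c1 c2 : ℝ} (hc1 : 0 ≤ c1) (hc2 : c2 ≤ 0)
    (w : EuclideanSpace ℝ (Fin n)) :
    lam * c1 * ‖w‖ ^ 2 + Lam * n * c2 ≤ (B * (c1 • Matrix.of (fun i j => w i * w j) +
        c2 • (1 : Matrix (Fin n) (Fin n) ℝ))).trace := by
  rw [Matrix.mul_add, Matrix.trace_add, Matrix.mul_smul, Matrix.mul_smul, Matrix.trace_smul,
    Matrix.trace_smul, Matrix.mul_one]
  have h1 := adm_rankone hB w
  have h2 := adm_trace_le hB
  have h3 : ‖w‖ ^ 2 = ∑ i, w i ^ 2 := by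
    rw [EuclideanSpace.norm_sq_eq]; simp
  rw [h3]
  simp only [smul_eq_mul]
  nlinarith

theorem ennreal_add_pow_le (x y : ℝ≥0∞) (n : ℕ) : (x + y) ^ n ≤ 2 ^ n * (x ^ n + y ^ n) := by
  rcases le_total x y with h | h
  · calc (x + y) ^ n ≤ (2 * y) ^ n := by gcongr; rw [two_mul]; gcongr
      _ = 2 ^ n * y ^ n := mul_pow _ _ _
      _ ≤ _ := by gcongr; exact le_add_self
  · calc (x + y) ^ n ≤ (2 * x) ^ n := by gcongr; rw [two_mul]; gcongr
      _ = 2 ^ n * x ^ n := mul_pow _ _ _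
      _ ≤ _ := by gcongr; exact le_self_add

theorem lint_split {n : ℕ} {S : Set (EuclideanSpace ℝ (Fin n))} (hS : MeasurableSet S)
    {f b : EuclideanSpace ℝ (Fin n) → ℝ} (hf : ContinuousOn f S)
    {α β : ℝ} (hα : 0 ≤ α) (hβ : 0 ≤ β) :
    ∫⁻ x in S, ENNReal.ofReal (α * f x + β * b x) ^ n ≤
      2 ^ n * (ENNReal.ofReal (α ^ n) * ∫⁻ x in S, ENNReal.ofReal (f x) ^ n) +
      2 ^ n * (ENNReal.ofReal (β ^ n) * ∫⁻ x in S, ENNReal.ofReal (b x) ^ n) := by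
  have hfm : AEMeasurable f (volume.restrict S) := hf.aemeasurable hS
  have t2 : (2 : ℝ≥0∞) ^ n ≠ ∞ := by finiteness
  rw [← lintegral_const_mul' _ _ ENNReal.ofReal_ne_top,
    ← lintegral_const_mul' _ _ ENNReal.ofReal_ne_top, ← lintegral_const_mul' _ _ t2,
    ← lintegral_const_mul' _ _ t2, ← lintegral_add_left']
  · refine lintegral_mono fun x => ?_
    calc ENNReal.ofReal (α * f x + β * b x) ^ n
        ≤ (ENNReal.ofReal (α * f x) + ENNReal.ofReal (β * b x)) ^ n := by
          gcongr; exact ENNReal.ofReal_add_le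
      _ ≤ 2 ^ n * (ENNReal.ofReal (α * f x) ^ n + ENNReal.ofReal (β * b x) ^ n) :=
          ennreal_add_pow_le _ _ _
      _ = _ := by
          rw [ENNReal.ofReal_mul hα, ENNReal.ofReal_mul hβ, mul_pow, mul_pow,
            ENNReal.ofReal_pow hα, ENNReal.ofReal_pow hβ, mul_add]
  · exact ((hfm.ennreal_ofReal.pow_const n).const_mul _).const_mul _

theorem holder_lint {n : ℕ} (hn : 0 < n) {p : ℝ} (hp : (n : ℝ) ≤ p)
    {S : Set (EuclideanSpace ℝ (Fin n))} (hS : MeasurableSet S)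
    {f : EuclideanSpace ℝ (Fin n) → ℝ} (hf : ContinuousOn f S) :
    ∫⁻ x in S, ENNReal.ofReal (f x) ^ n ≤
      (LpNormE n p f S) ^ n * volume S ^ (1 - n / p) := by
  have hnn : (0 : ℝ) < n := by exact_mod_cast hn
  have hp0 : 0 < p := hnn.trans_le hp
  have h := eLpNorm'_le_eLpNorm'_mul_rpow_measure_univ (μ := volume.restrict S) (f := f) hnn hp
    (hf.aestronglyMeasurable hS)
  have e1 : ∫⁻ x in S, ENNReal.ofReal (f x) ^ n ≤ (eLpNorm' f n (volume.restrict S)) ^ n := by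
    rw [eLpNorm', ← ENNReal.rpow_natCast, ← ENNReal.rpow_mul, one_div, inv_mul_cancel₀ hnn.ne',
      ENNReal.rpow_one]
    refine lintegral_mono fun x => ?_
    rw [ENNReal.rpow_natCast]
    gcongr
    exact Real.ofReal_le_enorm (f x)
  have e2 : eLpNorm' f p (volume.restrict S) = LpNormE n p f S := by
    unfold eLpNorm' LpNormE
    congr 1
    refine lintegral_congr fun x => ?_
    rw [Real.enorm_eq_ofReal_abs, ENNReal.ofReal_rpow_of_nonneg (abs_nonneg _) hp0.le]
  rw [e2] at h
  refine e1.trans ((pow_le_pow_left' h n).trans (le_of_eq ?_))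
  rw [mul_pow]
  congr 1
  rw [Measure.restrict_apply_univ, ← ENNReal.rpow_natCast, ← ENNReal.rpow_mul]
  congr 1
  field_simp

/-- volume of the unit ball -/
noncomputable def om (n : ℕ) : ℝ := (volume (Metric.ball (0 : EuclideanSpace ℝ (Fin n)) 1)).toReal

theorem om_pos (n : ℕ) : 0 < om n :=
  ENNReal.toReal_pos (Metric.measure_ball_pos _ _ one_pos).ne' measure_ball_lt_top.ne

theorem vol_ball {n : ℕ} (c : EuclideanSpace ℝ (Fin n)) {r : ℝ} (hr : 0 ≤ r) (hn : 0 < n) :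
    volume (Metric.ball c r) = ENNReal.ofReal (om n * r ^ n) := by
  have : Nonempty (Fin n) := ⟨⟨0, hn⟩⟩
  rw [Measure.addHaar_ball _ _ hr, om, ENNReal.ofReal_mul ENNReal.toReal_nonneg,
    ENNReal.ofReal_toReal measure_ball_lt_top.ne, mul_comm]
  simp

/-- All the standing hypotheses on a supersolution. -/
def Sol (n : ℕ) (lam Lam : ℝ) (b f u : EuclideanSpace ℝ (Fin n) → ℝ) : Prop :=
  ContinuousOn b (Metric.ball 0 1) ∧ ContinuousOn f (Metric.ball 0 1) ∧
  (∀ x ∈ Metric.ball (0 : EuclideanSpace ℝ (Fin n)) 1, 0 ≤ b x) ∧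
  (∀ x ∈ Metric.ball (0 : EuclideanSpace ℝ (Fin n)) 1, 0 ≤ f x) ∧
  ContDiffOn ℝ 2 u (Metric.ball 0 1) ∧
  (∀ x ∈ Metric.ball (0 : EuclideanSpace ℝ (Fin n)) 1, 0 ≤ u x) ∧
  (∀ x ∈ Metric.ball (0 : EuclideanSpace ℝ (Fin n)) 1,
          pucciMinus n lam Lam (hess n u x) - b x * gradNorm n u x ≤ f x)

theorem gs_barrier {n : ℕ} {lam Lam : ℝ} {M r β : ℝ} (hM : 0 < M)
    (hβ : 0 < β) (hLam0 : 0 < Lam) (hb : lam * β * r ^ 2 = Lam * n)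
    (e1 : ℝ) (c : EuclideanSpace ℝ (Fin n))
    (x : EuclideanSpace ℝ (Fin n)) (B : Matrix (Fin n) (Fin n) ℝ) (hB : Adm n lam Lam B)
    (hr : 0 < r) :
    2 * M * β * Real.exp (-β * ‖x - c‖ ^ 2) * (Lam * n) * (2 * (‖x - c‖ ^ 2 / r ^ 2) - 1) ≤
      (B * hess n (fun y => (fun s => M * (Real.exp (-β * s) - e1)) (‖y - c‖ ^ 2)) x).trace := by
  have hE : ∀ s, HasDerivAt (fun s => Real.exp (-β * s)) (-β * Real.exp (-β * s)) s := fun s => by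
    have h1 : HasDerivAt (fun s : ℝ => -β * s) (-β) s := by
      simpa using (hasDerivAt_id s).const_mul (-β)
    have := h1.exp
    rwa [mul_comm] at this
  have hG : ∀ s, HasDerivAt (fun s => M * (Real.exp (-β * s) - e1))
      (M * (-β * Real.exp (-β * s))) s := fun s => ((hE s).sub_const e1).const_mul M
  have hG' : ∀ s, HasDerivAt (fun s => M * (-β * Real.exp (-β * s)))
      (M * (-β * (-β * Real.exp (-β * s)))) s := fun s => ((hE s).const_mul (-β)).const_mul M
  rw [radial_hess hG hG' c x]
  set E := Real.exp (-β * ‖x - c‖ ^ 2)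
  have hE0 : 0 < E := Real.exp_pos _
  have hMb : 0 < M * β * E := by positivity
  refine le_trans (le_of_eq ?_) (adm_radial hB ?_ ?_ (x - c))
  · have : (Lam * n) * (2 * (‖x - c‖ ^ 2 / r ^ 2)) = 2 * lam * β * ‖x - c‖ ^ 2 := by
      rw [← hb]; field_simp
    linear_combination (2 * M * β * E) * this
  · nlinarith [mul_pos hMb hβ]
  · nlinarith

theorem gs_contDiff {n : ℕ} (M β e1 : ℝ) (c : EuclideanSpace ℝ (Fin n)) :
    ContDiff ℝ 2 (fun y => (fun s => M * (Real.exp (-β * s) - e1)) (‖y - c‖ ^ 2)) := by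
  have h : ContDiff ℝ 2 (fun y : EuclideanSpace ℝ (Fin n) => ‖y - c‖ ^ 2) :=
    (contDiff_id.sub contDiff_const).norm_sq ℝ
  exact contDiff_const.mul (((contDiff_const.mul h).exp).sub contDiff_const)

theorem gs_grad {n : ℕ} {M β : ℝ} (hM : 0 < M)
    (hβ : 0 < β) (e1 : ℝ) (c : EuclideanSpace ℝ (Fin n))
    (x : EuclideanSpace ℝ (Fin n)) :
    ‖fderiv ℝ (fun y => (fun s => M * (Real.exp (-β * s) - e1)) (‖y - c‖ ^ 2)) x‖ ≤
      2 * M * β * ‖x - c‖ := by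
  have hE : ∀ s, HasDerivAt (fun s => Real.exp (-β * s)) (-β * Real.exp (-β * s)) s := fun s => by
    have h1 : HasDerivAt (fun s : ℝ => -β * s) (-β) s := by
      simpa using (hasDerivAt_id s).const_mul (-β)
    have := h1.exp
    rwa [mul_comm] at this
  have hG : ∀ s, HasDerivAt (fun s => M * (Real.exp (-β * s) - e1))
      (M * (-β * Real.exp (-β * s))) s := fun s => ((hE s).sub_const e1).const_mul M
  rw [radial_grad_norm hG c x]
  have h1 : Real.exp (-β * ‖x - c‖ ^ 2) ≤ 1 := by
    rw [Real.exp_le_one_iff]; nlinarith [sq_nonneg ‖x - c‖]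
  have : |M * (-β * Real.exp (-β * ‖x - c‖ ^ 2))| = M * β * Real.exp (-β * ‖x - c‖ ^ 2) := by
    rw [abs_of_nonpos] 
    · ring
    · have := Real.exp_pos (-β * ‖x - c‖ ^ 2)
      have : 0 < M * β * Real.exp (-β * ‖x - c‖ ^ 2) := by positivity
      linarith
  rw [this]
  have h2 : M * β * Real.exp (-β * ‖x - c‖ ^ 2) ≤ M * β * 1 := by gcongr
  nlinarith [norm_nonneg (x - c)]

/-- splitting of the final integral -/
theorem gs_integral {n : ℕ} {A S T : Set (EuclideanSpace ℝ (Fin n))} (hA : MeasurableSet A)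
    (hS : MeasurableSet S) (hT : MeasurableSet T) (hAS : A ⊆ S)
    {F f b : EuclideanSpace ℝ (Fin n) → ℝ} (hf : ContinuousOn f S) {α β C : ℝ}
    (hα : 0 ≤ α) (hβ : 0 ≤ β) (hC : 0 ≤ C)
    (h1 : ∀ x ∈ A, x ∉ T → F x ≤ α * f x + β * b x)
    (h2 : ∀ x ∈ A, x ∈ T → F x ≤ α * f x + β * b x + C) :
    ∫⁻ x in A, ENNReal.ofReal (F x) ^ n ≤
      2 ^ n * (2 ^ n * (ENNReal.ofReal (α ^ n) * ∫⁻ x in S, ENNReal.ofReal (f x) ^ n) +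
      2 ^ n * (ENNReal.ofReal (β ^ n) * ∫⁻ x in S, ENNReal.ofReal (b x) ^ n)) +
      2 ^ n * (ENNReal.ofReal (C ^ n) * volume (T ∩ A)) := by
  have t2 : (2 : ℝ≥0∞) ^ n ≠ ∞ := by finiteness
  calc ∫⁻ x in A, ENNReal.ofReal (F x) ^ n
      ≤ ∫⁻ x in A, (2 ^ n * (ENNReal.ofReal (α * f x + β * b x) ^ n) +
          2 ^ n * T.indicator (fun _ => ENNReal.ofReal (C ^ n)) x) := by
        refine setLIntegral_mono' hA fun x hx => ?_
        by_cases hxT : x ∈ T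
        · rw [Set.indicator_of_mem hxT, ENNReal.ofReal_pow hC, ← mul_add]
          refine le_trans ?_ (ennreal_add_pow_le _ _ _)
          gcongr
          exact (ENNReal.ofReal_le_ofReal (h2 x hx hxT)).trans ENNReal.ofReal_add_le
        · rw [Set.indicator_of_notMem hxT, mul_zero, add_zero]
          calc ENNReal.ofReal (F x) ^ n ≤ ENNReal.ofReal (α * f x + β * b x) ^ n := by
                gcongr; exact h1 x hx hxT
            _ = 1 * ENNReal.ofReal (α * f x + β * b x) ^ n := (one_mul _).symm
            _ ≤ _ := by gcongr; exact one_le_pow₀ (by norm_num)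
    _ = 2 ^ n * (∫⁻ x in A, ENNReal.ofReal (α * f x + β * b x) ^ n) +
        2 ^ n * (ENNReal.ofReal (C ^ n) * volume (T ∩ A)) := by
        rw [lintegral_add_right, lintegral_const_mul' _ _ t2, lintegral_const_mul' _ _ t2,
          lintegral_indicator hT, setLIntegral_const, Measure.restrict_apply hT]
        exact (measurable_const.indicator hT).const_mul _
    _ ≤ _ := by
        gcongr
        exact (lintegral_mono_set hAS).trans (lint_split hS hf hα hβ)

/-- The growth step with constants `μ ε θ`. -/
def GS (n : ℕ) (lam Lam μ ε θ : ℝ) : Prop :=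
  ∀ b f u : EuclideanSpace ℝ (Fin n) → ℝ, Sol n lam Lam b f u →
    ∀ (c : EuclideanSpace ℝ (Fin n)) (r M : ℝ), 0 < r → r ≤ 1 → 0 < M →
    Metric.closedBall c (16 * r) ⊆ Metric.ball 0 1 →
    ∫⁻ x in Metric.ball c (16 * r), ENNReal.ofReal (b x) ^ n ≤ ENNReal.ofReal ε →
    ∫⁻ x in Metric.ball 0 1, ENNReal.ofReal (f x) ^ n ≤ ENNReal.ofReal (ε * M ^ n) →
    volume {x ∈ Metric.ball c r | u x < M} ≤ ENNReal.ofReal μ * volume (Metric.ball c r) →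
    ∀ x ∈ Metric.ball c (8 * r), θ * M ≤ u x

set_option maxHeartbeats 4000000 in
theorem growth_step {n : ℕ} (hn : 0 < n) {lam Lam : ℝ} (hlam : 0 < lam) (hLam : lam ≤ Lam) :
    ∃ μ ε θ : ℝ, 0 < μ ∧ μ < 1 ∧ 0 < ε ∧ 0 < θ ∧ θ < 1 ∧ GS n lam Lam μ ε θ := by
  have hnn : (0 : ℝ) < n := by exact_mod_cast hn
  have hLam0 : 0 < Lam := hlam.trans_le hLam
  set α := Lam * n / lam with hα
  have hα0 : 0 < α := by positivity
  set e1 := Real.exp (-256 * α) with he1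
  have he10 : 0 < e1 := Real.exp_pos _
  set τ := Real.exp (-64 * α) - e1 with hτ
  have hτ0 : 0 < τ := by
    have : e1 < Real.exp (-64 * α) := Real.exp_lt_exp.2 (by linarith)
    linarith
  have hτ1 : τ < 1 := by
    have : Real.exp (-64 * α) < 1 := Real.exp_lt_one_iff.2 (by linarith)
    linarith
  set a1 := min (2 * α * e1) (τ / 2) with ha1
  have ha10 : 0 < a1 := lt_min (by positivity) (by positivity)
  have ha1e : a1 ≤ 2 * α * e1 := min_le_left _ _
  have ha1τ : a1 ≤ τ / 2 := min_le_right _ _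
  set G0 := 32 * α + 25 * a1 with hG0
  have hG00 : 0 < G0 := by positivity
  set C1 := (2 * α * (Lam * n) / a1 + Lam * n) / (lam * n) with hC1
  have hC10 : 0 < C1 := by positivity
  set q1 := (1 / (a1 * (lam * n))) ^ n with hq1
  set q2 := (G0 / (a1 * (lam * n))) ^ n with hq2
  have hq10 : 0 < q1 := by positivity
  have hq20 : 0 < q2 := by positivity
  have hω := om_pos n
  set ω := om n with hωd
  set ε := ω / (4 * 4 ^ n * (q1 + q2)) with hε
  have hε0 : 0 < ε := by positivity
  set μ := min (1 / 2) (1 / (4 * 2 ^ n * C1 ^ n)) with hμ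
  have hμ0 : 0 < μ := lt_min (by norm_num) (by positivity)
  have hμ2 : μ < 1 := (min_le_left _ _).trans_lt (by norm_num)
  clear_value μ ε ω q2 q1 C1 G0 a1 τ e1 α
  refine ⟨μ, ε, τ / 2, hμ0, hμ2, hε0, by positivity,
    by linarith, ?_⟩
  intro b f u ⟨hb, hf, hb0, hf0, hu, hu0, hpde⟩ c r M hr hr1 hM hball hbi hfi hvol x0 hx0
  by_contra hcon
  push Not at hcon
  set β := α / r ^ 2 with hβ
  have hβ0 : 0 < β := by positivity
  set Φ : EuclideanSpace ℝ (Fin n) → ℝ :=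
    fun y => (fun s => M * (Real.exp (-β * s) - e1)) (‖y - c‖ ^ 2) with hΦ
  have hΦc : ContDiff ℝ 2 Φ := gs_contDiff M β e1 c
  set U := Metric.ball c (16 * r) with hU
  have hUK : U ⊆ Metric.closedBall c (16 * r) := Metric.ball_subset_closedBall
  have hU1 : U ⊆ Metric.ball 0 1 := hUK.trans hball
  set a := a1 * M / r ^ 2 with hadef
  have ha0 : 0 < a := by positivity
  have hadr : a * r ^ 2 = a1 * M := by rw [hadef]; field_simp
  have hβr : β * r ^ 2 = α := by rw [hβ]; field_simp
  have hlb : lam * β * r ^ 2 = Lam * n := by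
    rw [mul_assoc, hβr, hα]; field_simp
  set A : Set (EuclideanSpace ℝ (Fin n)) := U ∩ u ⁻¹' (Set.Iio M) with hA
  have hAo : IsOpen A := (hu.continuousOn.mono hU1).isOpen_inter_preimage Metric.isOpen_ball isOpen_Iio
  have hnd : ∀ x, x ∈ U ↔ ‖x - c‖ < 16 * r := fun x => by rw [hU, mem_ball_iff_norm]
  have hx0n : ‖x0 - c‖ < 8 * r := by rwa [mem_ball_iff_norm] at hx0
  have hx0U : x0 ∈ U := (hnd x0).2 (by linarith)
  have hΦle : ∀ x, Φ x < M := fun x => by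
    have : Real.exp (-β * ‖x - c‖ ^ 2) ≤ 1 := by
      rw [Real.exp_le_one_iff]; nlinarith only [sq_nonneg ‖x - c‖, hβ0]
    simp only [hΦ]; nlinarith only [this, hM, he10]
  have hΦx0 : τ * M ≤ Φ x0 := by
    have : Real.exp (-64 * α) ≤ Real.exp (-β * ‖x0 - c‖ ^ 2) := by
      refine Real.exp_le_exp.2 ?_
      have : ‖x0 - c‖ ^ 2 ≤ (8 * r) ^ 2 := by gcongr
      nlinarith only [this, hβ0, hβr]
    have h3 := mul_le_mul_of_nonneg_left (sub_le_sub_right this e1) hM.le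
    simp only [hΦ]; rw [hτ]; linarith
  have hh0 : (u - Φ) x0 + a / 2 * r ^ 2 < 0 := by
    simp only [Pi.sub_apply]; nlinarith only [hadr, hΦx0, hcon, ha1τ, hM, mul_pos hτ0 hM]
  set αf := r ^ 2 / M * (1 / (a1 * (lam * n))) with hαf
  set βb := r * (G0 / (a1 * (lam * n))) with hβb
  have key := key_lemma hn hlam hLam (isCompact_closedBall c (16 * r)) Metric.isOpen_ball hUK
    (hu.mono hU1) hΦc.contDiffOn
    ((hu.continuousOn.mono hball).sub hΦc.continuous.continuousOn) hx0U (ρ := r) (D := 24 * r) ha0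
    (fun x hx => by
      rw [Metric.mem_closedBall] at hx ⊢
      rw [← dist_eq_norm] at hx0n
      linarith [dist_triangle x c x0, dist_comm x0 c])
    (fun x hx hxU => by
      refine hh0.trans_le ?_
      rw [mem_closedBall_iff_norm] at hx
      rw [hnd] at hxU
      have e : ‖x - c‖ = 16 * r := le_antisymm hx (not_lt.1 hxU)
      have : Φ x = 0 := by
        simp only [hΦ, e]
        rw [show -β * (16 * r) ^ 2 = -256 * (β * r ^ 2) by ring, hβr, he1]; ring
      have h2 := hu0 x (hball (mem_closedBall_iff_norm.2 hx))
      simp only [Pi.sub_apply, this]; linarith)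
    (fun x => f x + b x * (G0 * M / r))
    (fun x => if ‖x - c‖ < r then -(2 * M * β * (Lam * n)) else 2 * M * β * e1 * (Lam * n)) A
    (fun x hx h1 _ => ⟨hx, by
      have := hΦle x
      simp only [Pi.sub_apply] at h1 hh0
      rw [Set.mem_preimage, Set.mem_Iio]; linarith⟩)
    (fun x hx _ _ h2 => by
      have h3 := hpde x (hU1 hx)
      have hbx := hb0 x (hU1 hx)
      have hud : DifferentiableAt ℝ u x :=
        (hu.contDiffAt (Metric.isOpen_ball.mem_nhds (hU1 hx))).differentiableAt (by norm_num)
      have hΦd : DifferentiableAt ℝ Φ x := hΦc.contDiffAt.differentiableAt (by norm_num)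
      have e : fderiv ℝ u x = fderiv ℝ (u - Φ) x + fderiv ℝ Φ x := by
        rw [fderiv_sub hud hΦd]; simp
      have h4 : ‖fderiv ℝ Φ x‖ ≤ 2 * M * β * ‖x - c‖ := gs_grad hM hβ0 e1 c x
      have h5 : gradNorm n u x ≤ G0 * M / r := by
        unfold gradNorm
        rw [e]
        refine (norm_add_le _ _).trans ((add_le_add h2 h4).trans ?_)
        have h6 : ‖x - c‖ ≤ 16 * r := ((hnd x).1 hx).le
        have h7 : 2 * M * β * ‖x - c‖ ≤ 2 * M * β * (16 * r) := by gcongr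
        refine (add_le_add le_rfl h7).trans (le_of_eq ?_)
        rw [hadef, hβ, hG0]; field_simp; ring
      have := mul_le_mul_of_nonneg_left h5 hbx
      linarith)
    (fun x hx _ B hB => by
      refine le_trans ?_ (gs_barrier hM hβ0 hLam0 hlb e1 c x B hB hr)
      have hE1 : Real.exp (-β * ‖x - c‖ ^ 2) ≤ 1 := by
        rw [Real.exp_le_one_iff]; nlinarith only [sq_nonneg ‖x - c‖, hβ0]
      have hE2 : e1 ≤ Real.exp (-β * ‖x - c‖ ^ 2) := by
        rw [he1]
        refine Real.exp_le_exp.2 ?_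
        have : ‖x - c‖ ^ 2 ≤ (16 * r) ^ 2 := by
          have := ((hnd x).1 hx).le
          gcongr
        nlinarith only [this, hβ0, hβr]
      set E := Real.exp (-β * ‖x - c‖ ^ 2)
      have hP : 0 < 2 * M * β * (Lam * n) := by positivity
      split_ifs with hxr
      · have h1 : (0 : ℝ) ≤ ‖x - c‖ ^ 2 / r ^ 2 := by positivity
        have h2 : 0 ≤ (2 * M * β * (Lam * n)) * E * (2 * (‖x - c‖ ^ 2 / r ^ 2)) := by positivity
        nlinarith only [h2, hE1, hP]
      · have h1 : 1 ≤ ‖x - c‖ ^ 2 / r ^ 2 := by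
          rw [le_div_iff₀ (by positivity), one_mul]
          have := not_lt.1 hxr
          gcongr
        have h2 : 0 ≤ (2 * M * β * (Lam * n)) * E * (‖x - c‖ ^ 2 / r ^ 2 - 1) := by
          have : 0 ≤ ‖x - c‖ ^ 2 / r ^ 2 - 1 := by linarith
          positivity
        nlinarith only [h2, hE2, hP])
  have hgn : ∀ x ∈ U, ((f x + b x * (G0 * M / r)) / a) / (lam * n) = αf * f x + βb * b x :=
    fun x _ => by rw [hαf, hβb, hadef]; field_simp
  have key2 := key.trans (gs_integral (F := fun x => (((f x + b x * (G0 * M / r)) -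
      (if ‖x - c‖ < r then -(2 * M * β * (Lam * n)) else 2 * M * β * e1 * (Lam * n))) / a
      + Lam * n) / (lam * n)) (f := f) (b := b) (α := αf) (β := βb) (C := C1)
      hAo.measurableSet Metric.isOpen_ball.measurableSet
    (Metric.isOpen_ball (x := c) (ε := r)).measurableSet Set.inter_subset_left
    (hf.mono hU1) (by positivity) (by positivity) hC10.le
    (fun x hx hxT => by
      rw [mem_ball_iff_norm] at hxT
      rw [← hgn x hx.1]
      simp only [hxT, if_false]
      refine div_le_div_of_nonneg_right ?_ (by positivity)
      rw [sub_div]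
      have : Lam * n ≤ 2 * M * β * e1 * (Lam * n) / a := by
        rw [le_div_iff₀ ha0]
        have : a ≤ 2 * M * β * e1 := by
          rw [hadef, hβ, div_le_iff₀ (by positivity)]
          have : 2 * M * (α / r ^ 2) * e1 * r ^ 2 = 2 * M * α * e1 := by field_simp
          rw [this]; nlinarith only [ha1e, hM]
        nlinarith only [mul_pos hLam0 hnn, this]
      linarith)
    (fun x hx hxT => by
      rw [mem_ball_iff_norm] at hxT
      rw [← hgn x hx.1]
      simp only [hxT, if_true]
      refine le_of_eq ?_
      rw [hC1, hadef, hβ]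
      field_simp
      ring))
  have hTA : volume (Metric.ball c r ∩ A) ≤ ENNReal.ofReal (μ * (ω * r ^ n)) := by
    refine (measure_mono ?_).trans (hvol.trans (le_of_eq ?_))
    · rintro x ⟨hx1, hx2⟩
      exact ⟨hx1, hx2.2⟩
    · rw [vol_ball c hr.le hn, ← hωd, ← ENNReal.ofReal_mul hμ0.le]
  have hfi2 : ∫⁻ x in U, ENNReal.ofReal (f x) ^ n ≤ ENNReal.ofReal (ε * M ^ n) :=
    (lintegral_mono_set hU1).trans hfi
  have hαf0 : 0 ≤ αf := by positivity
  have hβb0 : 0 ≤ βb := by positivity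
  have key3 : ENNReal.ofReal (ω * r ^ n) ≤ ENNReal.ofReal
      (2 ^ n * (2 ^ n * (αf ^ n * (ε * M ^ n)) + 2 ^ n * (βb ^ n * ε)) +
        2 ^ n * (C1 ^ n * (μ * (ω * r ^ n)))) := by
    have hv : volume (Metric.ball x0 r) = ENNReal.ofReal (ω * r ^ n) := by
      rw [vol_ball x0 hr.le hn, hωd]
    rw [← hv]
    refine key2.trans ?_
    rw [ENNReal.ofReal_add (by positivity) (by positivity), ENNReal.ofReal_mul (by positivity),
      ENNReal.ofReal_add (by positivity) (by positivity), ENNReal.ofReal_mul (by positivity),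
      ENNReal.ofReal_mul (p := αf ^ n) (by positivity), ENNReal.ofReal_mul (p := 2 ^ n) (q := βb ^ n * ε) (by positivity),
      ENNReal.ofReal_mul (p := βb ^ n) (by positivity),
      ENNReal.ofReal_mul (p := 2 ^ n) (q := C1 ^ n * (μ * (ω * r ^ n))) (by positivity),
      ENNReal.ofReal_mul (p := C1 ^ n) (by positivity)]
    have e2 : ENNReal.ofReal ((2 : ℝ) ^ n) = 2 ^ n := by
      rw [ENNReal.ofReal_pow (by norm_num)]; simp
    rw [e2]
    gcongr
  rw [ENNReal.ofReal_le_ofReal_iff (by positivity)] at key3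
  have hf1 : αf ^ n * M ^ n ≤ r ^ n * q1 := by
    rw [hαf, ← mul_pow, hq1, ← mul_pow]
    refine pow_le_pow_left₀ (by positivity) ?_ n
    have : r ^ 2 / M * (1 / (a1 * (lam * n))) * M = r ^ 2 * (1 / (a1 * (lam * n))) := by
      field_simp
    rw [this]
    gcongr
    nlinarith only [hr, hr1]
  have hb1 : βb ^ n = r ^ n * q2 := by rw [hβb, mul_pow, hq2]
  have hμ1 : 2 ^ n * C1 ^ n * μ ≤ 1 / 4 := by
    calc 2 ^ n * C1 ^ n * μ ≤ 2 ^ n * C1 ^ n * (1 / (4 * 2 ^ n * C1 ^ n)) := by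
          rw [hμ]; gcongr; exact min_le_right _ _
      _ = 1 / 4 := by field_simp
  have hε1 : 4 ^ n * (ε * (q1 + q2)) = ω / 4 := by rw [hε]; field_simp
  have h4 : (2 : ℝ) ^ n * 2 ^ n = 4 ^ n := by rw [← mul_pow]; norm_num
  have hfin : 2 ^ n * (2 ^ n * (αf ^ n * (ε * M ^ n)) + 2 ^ n * (βb ^ n * ε)) +
        2 ^ n * (C1 ^ n * (μ * (ω * r ^ n))) ≤ (ω / 2) * r ^ n := by
    calc _ = (2 ^ n * 2 ^ n) * (ε * (αf ^ n * M ^ n)) + (2 ^ n * 2 ^ n) * (βb ^ n * ε) +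
        (2 ^ n * C1 ^ n * μ) * (ω * r ^ n) := by ring
      _ ≤ (2 ^ n * 2 ^ n) * (ε * (r ^ n * q1)) + (2 ^ n * 2 ^ n) * ((r ^ n * q2) * ε) +
        (1 / 4) * (ω * r ^ n) := by rw [hb1]; gcongr
      _ = (4 ^ n * (ε * (q1 + q2))) * r ^ n + (1 / 4) * (ω * r ^ n) := by rw [h4]; ring
      _ = _ := by rw [hε1]; ring
  have : 0 < ω * r ^ n := by positivity
  linarith

theorem vol_cball {n : ℕ} (c : EuclideanSpace ℝ (Fin n)) {r : ℝ} (hr : 0 ≤ r) (hn : 0 < n) :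
    volume (Metric.closedBall c r) = ENNReal.ofReal (om n * r ^ n) := by
  have : Nonempty (Fin n) := ⟨⟨0, hn⟩⟩
  rw [Measure.addHaar_closedBall _ _ hr, om, ENNReal.ofReal_mul ENNReal.toReal_nonneg,
    ENNReal.ofReal_toReal measure_ball_lt_top.ne, mul_comm]
  simp

theorem ink_core {n : ℕ} (hn : 0 < n) {E G : Set (EuclideanSpace ℝ (Fin n))}
    (hG : MeasurableSet G) {m R0 : ℝ} (hm : 0 < m)
    (h : ∀ᵐ x, x ∈ E → ∃ R, 0 < R ∧ R ≤ R0 ∧ ENNReal.ofReal m * volume (Metric.closedBall x R) ≤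
      volume (Metric.closedBall x R ∩ G)) :
    ENNReal.ofReal (m / 5 ^ n) * volume E ≤ volume G := by
  classical
  set t : Set (EuclideanSpace ℝ (Fin n)) := {x | x ∈ E ∧ ∃ R, 0 < R ∧ R ≤ R0 ∧
    ENNReal.ofReal m * volume (Metric.closedBall x R) ≤
      volume (Metric.closedBall x R ∩ G)} with ht
  have hEt : volume E ≤ volume t := by
    refine measure_mono_ae ?_
    filter_upwards [h] with x hx hxE using ⟨hxE, hx hxE⟩
  have ht2 : ∀ x, ∃ R, x ∈ t → 0 < R ∧ R ≤ R0 ∧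
    ENNReal.ofReal m * volume (Metric.closedBall x R) ≤
      volume (Metric.closedBall x R ∩ G) := by
    intro x
    by_cases hx : x ∈ t
    · obtain ⟨R, hR⟩ := hx.2
      exact ⟨R, fun _ => hR⟩
    · exact ⟨0, fun h => absurd h hx⟩
  choose R hR using ht2
  obtain ⟨w, hwt, hdis, hcov⟩ := Vitali.exists_disjoint_subfamily_covering_enlargement_closedBall
    t id R R0 (fun a ha => (hR a ha).2.1) 5 (by norm_num)
  simp only [id] at hdis hcov
  have hwc : w.Countable := hdis.countable_of_nonempty_interior fun x hx =>
    ⟨x, Metric.ball_subset_interior_closedBall (Metric.mem_ball_self (hR x (hwt hx)).1)⟩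
  have hdis2 : w.PairwiseDisjoint fun x => Metric.closedBall x (R x) ∩ G :=
    hdis.mono fun x => Set.inter_subset_left
  have h1 : volume t ≤ ∑' x : w, volume (Metric.closedBall (x : EuclideanSpace ℝ (Fin n)) (5 * R x)) := by
    have h0 := measure_biUnion_le volume hwc fun x => Metric.closedBall x (5 * R x)
    refine le_trans (measure_mono fun x hx => ?_) h0
    obtain ⟨b, hb, hb2⟩ := hcov x hx
    exact Set.mem_biUnion hb (hb2 (Metric.mem_closedBall_self (hR x hx).1.le))
  have h2 : ∑' x : w, volume (Metric.closedBall (x : EuclideanSpace ℝ (Fin n)) (R x) ∩ G) ≤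
      volume G := by
    rw [← measure_biUnion hwc hdis2 fun x _ => Metric.isClosed_closedBall.measurableSet.inter hG]
    exact measure_mono (Set.iUnion₂_subset fun x _ => Set.inter_subset_right)
  calc ENNReal.ofReal (m / 5 ^ n) * volume E ≤ ENNReal.ofReal (m / 5 ^ n) *
      ∑' x : w, volume (Metric.closedBall (x : EuclideanSpace ℝ (Fin n)) (5 * R x)) := by
        gcongr; exact hEt.trans h1
    _ = ∑' x : w, ENNReal.ofReal (m / 5 ^ n) *
        volume (Metric.closedBall (x : EuclideanSpace ℝ (Fin n)) (5 * R x)) :=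
        ENNReal.tsum_mul_left.symm
    _ ≤ ∑' x : w, volume (Metric.closedBall (x : EuclideanSpace ℝ (Fin n)) (R x) ∩ G) := by
        refine ENNReal.tsum_le_tsum fun x => ?_
        have hx := hR x (hwt x.2)
        refine le_trans (le_of_eq ?_) hx.2.2
        have h0 := hx.1.le
        have hω := om_pos n
        rw [vol_cball _ (by positivity) hn, vol_cball _ h0 hn, ← ENNReal.ofReal_mul (by positivity),
          ← ENNReal.ofReal_mul (by positivity)]
        congr 1
        rw [mul_pow]; field_simp
    _ ≤ _ := h2

theorem ink_step {n : ℕ} (hn : 0 < n) {lam Lam μ ε θ : ℝ} (hμ : 0 < μ)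
    (hθ1 : θ < 1) (hGS : GS n lam Lam μ ε θ)
    {b f u : EuclideanSpace ℝ (Fin n) → ℝ} (hs : Sol n lam Lam b f u)
    {c : EuclideanSpace ℝ (Fin n)} {ρ M : ℝ} (hρ : 0 < ρ) (hρ1 : ρ ≤ 1) (hM : 0 < M)
    (hball : Metric.closedBall c (16 * ρ) ⊆ Metric.ball 0 1)
    (hbi : ∫⁻ x in Metric.ball c (16 * ρ), ENNReal.ofReal (b x) ^ n ≤ ENNReal.ofReal ε)
    (hfi : ∫⁻ x in Metric.ball 0 1, ENNReal.ofReal (f x) ^ n ≤ ENNReal.ofReal (ε * M ^ n)) :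
    (∀ x ∈ Metric.ball c ρ, θ * M ≤ u x) ∨
      ENNReal.ofReal (1 + μ / 2 ^ n / 5 ^ n) * volume {x ∈ Metric.ball c ρ | M ≤ u x} ≤
        volume {x ∈ Metric.ball c ρ | θ * M ≤ u x} := by
  by_cases hP0 : volume {x ∈ Metric.ball c ρ | u x < M} ≤ ENNReal.ofReal μ * volume (Metric.ball c ρ)
  · left
    intro x hx
    exact hGS b f u hs c ρ M hρ hρ1 hM hball hbi hfi hP0 x
      (Metric.ball_subset_ball (by linarith) hx)
  right
  push Not at hP0
  have hω := om_pos n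
  have hQ1 : Metric.ball c ρ ⊆ Metric.ball 0 1 :=
    ((Metric.ball_subset_ball (by linarith)).trans Metric.ball_subset_closedBall).trans hball
  have huc : ContinuousOn u (Metric.ball c ρ) := hs.2.2.2.2.1.continuousOn.mono hQ1
  have hmeas : ∀ m : ℝ, MeasurableSet {x ∈ Metric.ball c ρ | u x < m} := fun m =>
    (huc.isOpen_inter_preimage Metric.isOpen_ball isOpen_Iio).measurableSet
  have hmeas2 : ∀ m : ℝ, MeasurableSet {x ∈ Metric.ball c ρ | m ≤ u x} := fun m => by
    have : {x ∈ Metric.ball c ρ | m ≤ u x} = Metric.ball c ρ \ {x ∈ Metric.ball c ρ | u x < m} := by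
      ext x; simp only [Set.mem_ofPred_eq, Set.mem_sdiff]
      constructor
      · rintro ⟨h1, h2⟩; exact ⟨h1, fun h => absurd h.2 (not_lt.2 h2)⟩
      · rintro ⟨h1, h2⟩; exact ⟨h1, not_lt.1 fun h => h2 ⟨h1, h⟩⟩
    rw [this]; exact Metric.isOpen_ball.measurableSet.diff (hmeas m)
  set W := {x ∈ Metric.ball c ρ | u x < M} with hW
  set E := {x ∈ Metric.ball c ρ | M ≤ u x} with hE
  set F := {x ∈ Metric.ball c ρ | θ * M ≤ u x} with hF
  have hEF : E ⊆ F := fun x hx => ⟨hx.1, le_trans (by nlinarith) hx.2⟩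
  set m := μ / 2 ^ n with hm
  have hm0 : 0 < m := by positivity
  have main : ENNReal.ofReal (m / 5 ^ n) * volume E ≤ volume (F \ E) := by
    refine ink_core (R0 := 2 * ρ) hn ((hmeas2 _).diff (hmeas2 _)) hm0 ?_
    filter_upwards [Besicovitch.ae_tendsto_measure_inter_div_of_measurableSet volume (hmeas M)]
      with x hx hxE
    rw [Set.indicator_of_notMem (fun h => absurd h.2 (not_lt.2 hxE.2))] at hx
    set P : ℕ → Prop := fun j => volume (W ∩ Metric.closedBall x (2 * ρ * (1 / 2) ^ j)) ≤
      ENNReal.ofReal m * volume (Metric.closedBall x (2 * ρ * (1 / 2) ^ j)) with hP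
    have hrj : ∀ j : ℕ, 0 < 2 * ρ * (1 / 2) ^ j := fun j => by positivity
    have hex : ∃ j, P j := by
      have ht : Filter.Tendsto (fun j : ℕ => 2 * ρ * (1 / 2 : ℝ) ^ j) Filter.atTop
          (nhdsWithin 0 (Set.Ioi 0)) := by
        refine tendsto_nhdsWithin_iff.2 ⟨?_, Filter.Eventually.of_forall hrj⟩
        simpa using (tendsto_pow_atTop_nhds_zero_of_lt_one (r := (1 / 2 : ℝ)) (by norm_num)
          (by norm_num)).const_mul (2 * ρ)
      have := (hx.comp ht).eventually_lt_const (u := ENNReal.ofReal m) (by simpa using hm0)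
      obtain ⟨j, hj⟩ := this.exists
      refine ⟨j, ?_⟩
      have h1 : volume (Metric.closedBall x (2 * ρ * (1 / 2) ^ j)) ≠ 0 :=
        (Metric.measure_closedBall_pos _ _ (hrj j)).ne'
      have h2 : volume (Metric.closedBall x (2 * ρ * (1 / 2) ^ j)) ≠ ∞ :=
        measure_closedBall_lt_top.ne
      exact (ENNReal.div_le_iff h1 h2).1 hj.le
    have hxc : ‖x - c‖ < ρ := mem_ball_iff_norm.1 hxE.1
    have hn0 : ¬ P 0 := by
      simp only [hP, pow_zero, mul_one, not_le]
      have hsub : W ∩ Metric.closedBall x (2 * ρ) = W := by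
        refine Set.inter_eq_left.2 fun y hy => ?_
        have := mem_ball_iff_norm.1 hy.1
        rw [mem_closedBall_iff_norm]
        calc ‖y - x‖ = ‖(y - c) - (x - c)‖ := by congr 1; abel
          _ ≤ ‖y - c‖ + ‖x - c‖ := norm_sub_le _ _
          _ ≤ _ := by linarith
      rw [hsub]
      refine lt_of_le_of_lt (le_of_eq ?_) hP0
      rw [vol_cball _ (by positivity) hn, vol_ball _ hρ.le hn, ← ENNReal.ofReal_mul (by positivity),
          ← ENNReal.ofReal_mul (by positivity)]
      congr 1
      rw [hm, mul_pow]; field_simp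
    classical
    obtain ⟨i, hi⟩ : ∃ i, Nat.find hex = i + 1 :=
      Nat.exists_eq_succ_of_ne_zero fun h => hn0 (h ▸ Nat.find_spec hex)
    have hPi : ¬ P i := Nat.find_min hex (by omega)
    have hPi1 : P (i + 1) := hi ▸ Nat.find_spec hex
    set r := 2 * ρ * (1 / 2 : ℝ) ^ (i + 1) with hr
    have h2r : 2 * ρ * (1 / 2 : ℝ) ^ i = 2 * r := by rw [hr, pow_succ]; ring
    have hr0 : 0 < r := hrj _
    have hrρ : r ≤ ρ := by
      have : (1 / 2 : ℝ) ^ i ≤ 1 := pow_le_one₀ (by norm_num) (by norm_num)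
      nlinarith
    simp only [hP] at hPi hPi1
    rw [h2r] at hPi
    refine ⟨2 * r, by linarith, by linarith, ?_⟩
    refine (not_le.1 hPi).le.trans (measure_mono ?_)
    set z := c + (1 - r / (2 * ρ)) • (x - c) with hz
    have hk1 : r / (2 * ρ) ≤ 1 / 2 := by rw [div_le_iff₀ (by positivity)]; linarith
    have hk0 : 0 < r / (2 * ρ) := by positivity
    have hk2 : r / (2 * ρ) * ρ = r / 2 := by field_simp
    have hzc : ‖z - c‖ ≤ ρ - r / 2 := by
      have : z - c = (1 - r / (2 * ρ)) • (x - c) := by rw [hz]; abel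
      rw [this, norm_smul, Real.norm_of_nonneg (by linarith)]
      nlinarith [norm_nonneg (x - c)]
    have hzx : ‖z - x‖ ≤ r / 2 := by
      have : z - x = -((r / (2 * ρ)) • (x - c)) := by rw [hz, sub_smul, one_smul]; abel
      rw [this, norm_neg, norm_smul, Real.norm_of_nonneg hk0.le]
      nlinarith [norm_nonneg (x - c)]
    have htri : ∀ y, ‖y - c‖ ≤ ‖y - z‖ + ‖z - c‖ := fun y => norm_sub_le_norm_sub_add_norm_sub y z c
    have htri2 : ∀ y, ‖y - x‖ ≤ ‖y - z‖ + ‖z - x‖ := fun y => norm_sub_le_norm_sub_add_norm_sub y z x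
    have hb1 : Metric.closedBall z (16 * (r / 2)) ⊆ Metric.closedBall c (16 * ρ) := fun y hy => by
      rw [mem_closedBall_iff_norm] at hy ⊢; linarith [htri y]
    have hb2 : Metric.ball z (16 * (r / 2)) ⊆ Metric.ball c (16 * ρ) := fun y hy => by
      rw [mem_ball_iff_norm] at hy ⊢; linarith [htri y]
    have hgs := hGS b f u hs z (r / 2) M (by positivity) (by linarith) hM (hb1.trans hball)
      ((lintegral_mono_set hb2).trans hbi) hfi (by
        refine (measure_mono (t := W ∩ Metric.closedBall x r) ?_).trans (hPi1.trans (le_of_eq ?_))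
        · rintro y ⟨hy1, hy2⟩
          rw [mem_ball_iff_norm] at hy1
          refine ⟨⟨mem_ball_iff_norm.2 ?_, hy2⟩, mem_closedBall_iff_norm.2 ?_⟩
          · linarith [htri y]
          · linarith [htri2 y]
        · rw [vol_cball _ hr0.le hn, vol_ball _ (by positivity) hn,
            ← ENNReal.ofReal_mul (by positivity), ← ENNReal.ofReal_mul (by positivity)]
          congr 1
          rw [hm, div_pow]; field_simp)
    rintro y ⟨hy1, hy2⟩
    rw [mem_closedBall_iff_norm] at hy2
    refine ⟨mem_closedBall_iff_norm.2 hy2, ⟨hy1.1, hgs y (mem_ball_iff_norm.2 ?_)⟩,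
      fun h => absurd hy1.2 (not_lt.2 h.2)⟩
    have := norm_sub_le_norm_sub_add_norm_sub y x z
    rw [norm_sub_rev x z] at this
    linarith
  rw [ENNReal.ofReal_add (by norm_num) (by positivity), add_mul, ENNReal.ofReal_one, one_mul]
  have : volume F = volume E + volume (F \ E) := by
    rw [← measure_inter_add_sdiff F (hmeas2 M), Set.inter_eq_right.2 hEF]
  rw [this]
  gcongr

theorem ink_iter {n : ℕ} (hn : 0 < n) {lam Lam μ ε θ : ℝ} (hμ : 0 < μ) (hε : 0 < ε)
    (hθ : 0 < θ) (hθ1 : θ < 1) (hGS : GS n lam Lam μ ε θ)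
    {b f u : EuclideanSpace ℝ (Fin n) → ℝ} (hs : Sol n lam Lam b f u)
    {c : EuclideanSpace ℝ (Fin n)} {ρ M : ℝ} (hρ : 0 < ρ) (hρ1 : ρ ≤ 1) (hM : 0 < M)
    (hball : Metric.closedBall c (16 * ρ) ⊆ Metric.ball 0 1)
    (hbi : ∫⁻ x in Metric.ball c (16 * ρ), ENNReal.ofReal (b x) ^ n ≤ ENNReal.ofReal ε)
    (N : ℕ)
    (hfi : ∫⁻ x in Metric.ball 0 1, ENNReal.ofReal (f x) ^ n ≤
      ENNReal.ofReal (ε * (θ ^ N * M) ^ n)) :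
    (∀ x ∈ Metric.ball c ρ, θ ^ N * M ≤ u x) ∨
      ENNReal.ofReal (1 + μ / 2 ^ n / 5 ^ n) ^ N * volume {x ∈ Metric.ball c ρ | M ≤ u x} ≤
        volume {x ∈ Metric.ball c ρ | θ ^ N * M ≤ u x} := by
  induction N with
  | zero => right; simp
  | succ N ih =>
    have h1 : θ ^ (N + 1) * M ≤ θ ^ N * M := by
      have : θ ^ (N + 1) ≤ θ ^ N := pow_le_pow_of_le_one hθ.le hθ1.le (by omega)
      gcongr
    have hfi2 : ∫⁻ x in Metric.ball 0 1, ENNReal.ofReal (f x) ^ n ≤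
      ENNReal.ofReal (ε * (θ ^ N * M) ^ n) := hfi.trans (by
        refine ENNReal.ofReal_le_ofReal ?_
        gcongr)
    rcases ih hfi2 with h | h
    · left; intro x hx; exact h1.trans (h x hx)
    · have e : θ * (θ ^ N * M) = θ ^ (N + 1) * M := by ring
      rcases ink_step hn hμ hθ1 hGS hs hρ hρ1 (M := θ ^ N * M) (by positivity) hball hbi hfi2
        with h2 | h2
      · left; intro x hx; rw [← e]; exact h2 x hx
      · right
        rw [e] at h2
        refine le_trans ?_ h2
        rw [pow_succ', mul_assoc]
        gcongr

theorem interior_growth {n : ℕ} (hn : 0 < n) {lam Lam μ ε θ : ℝ} (hμ : 0 < μ) (hε : 0 < ε)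
    (hθ : 0 < θ) (hθ1 : θ < 1) (hGS : GS n lam Lam μ ε θ) {ν : ℝ} (hν : 0 < ν) :
    ∃ N : ℕ, ∀ b f u : EuclideanSpace ℝ (Fin n) → ℝ, Sol n lam Lam b f u →
    ∀ (c : EuclideanSpace ℝ (Fin n)) (ρ M : ℝ), 0 < ρ → ρ ≤ 1 → 0 < M →
    Metric.closedBall c (16 * ρ) ⊆ Metric.ball 0 1 →
    ∫⁻ x in Metric.ball c (16 * ρ), ENNReal.ofReal (b x) ^ n ≤ ENNReal.ofReal ε →
    ∫⁻ x in Metric.ball 0 1, ENNReal.ofReal (f x) ^ n ≤ ENNReal.ofReal (ε * (θ ^ N * M) ^ n) →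
    ENNReal.ofReal ν ≤ volume {x ∈ Metric.ball c ρ | M ≤ u x} →
    ∀ x ∈ Metric.ball c ρ, θ ^ N * M ≤ u x := by
  have hω := om_pos n
  have hk : 0 < μ / 2 ^ n / 5 ^ n := by positivity
  obtain ⟨N, hN⟩ := pow_unbounded_of_one_lt (om n / ν) (show 1 < 1 + μ / 2 ^ n / 5 ^ n by linarith)
  refine ⟨N, fun b f u hs c ρ M hρ hρ1 hM hball hbi hfi hv => ?_⟩
  rcases ink_iter hn hμ hε hθ hθ1 hGS hs hρ hρ1 hM hball hbi N hfi with h | h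
  · exact h
  · exfalso
    have h1 : ENNReal.ofReal ((1 + μ / 2 ^ n / 5 ^ n) ^ N * ν) ≤ ENNReal.ofReal (om n) := by
      rw [ENNReal.ofReal_mul (by positivity), ENNReal.ofReal_pow (by positivity)]
      calc _ ≤ ENNReal.ofReal (1 + μ / 2 ^ n / 5 ^ n) ^ N *
            volume {x ∈ Metric.ball c ρ | M ≤ u x} := by gcongr
        _ ≤ _ := h
        _ ≤ volume (Metric.ball c ρ) := measure_mono fun x hx => hx.1
        _ = ENNReal.ofReal (om n * ρ ^ n) := vol_ball c hρ.le hn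
        _ ≤ _ := by
          refine ENNReal.ofReal_le_ofReal ?_
          have : ρ ^ n ≤ 1 := pow_le_one₀ hρ.le hρ1
          nlinarith
    rw [ENNReal.ofReal_le_ofReal_iff hω.le] at h1
    rw [div_lt_iff₀ hν] at hN
    linarith

theorem LpNormE_mono {n : ℕ} {p : ℝ} (hp : 0 < p) (g : EuclideanSpace ℝ (Fin n) → ℝ)
    {S T : Set (EuclideanSpace ℝ (Fin n))} (h : S ⊆ T) : LpNormE n p g S ≤ LpNormE n p g T := by
  unfold LpNormE
  exact ENNReal.rpow_le_rpow (lintegral_mono_set h) (by positivity)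

theorem holder_ball {n : ℕ} (hn : 0 < n) {p : ℝ} (hp : (n : ℝ) ≤ p)
    {S : Set (EuclideanSpace ℝ (Fin n))} (hS : MeasurableSet S)
    {f : EuclideanSpace ℝ (Fin n) → ℝ} (hf : ContinuousOn f S) {K V : ℝ} (hK : 0 ≤ K) (hV : 0 ≤ V)
    (hfK : LpNormE n p f S ≤ ENNReal.ofReal K) (hSV : volume S ≤ ENNReal.ofReal V) :
    ∫⁻ x in S, ENNReal.ofReal (f x) ^ n ≤ ENNReal.ofReal (K ^ n * V ^ (1 - n / p)) := by
  have hnn : (0 : ℝ) < n := by exact_mod_cast hn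
  have hp0 : 0 < p := hnn.trans_le hp
  have h0 : 0 ≤ 1 - n / p := by
    rw [sub_nonneg, div_le_one hp0]; exact hp
  refine (holder_lint hn hp hS hf).trans ?_
  rw [ENNReal.ofReal_mul (by positivity), ENNReal.ofReal_pow hK,
    ← ENNReal.ofReal_rpow_of_nonneg hV h0]
  gcongr

theorem chain {n : ℕ} {lam Lam μ ε θ : ℝ} (hμ : 0 < μ) (hε : 0 < ε)
    (hθ : 0 < θ) (hθ1 : θ < 1) (hGS : GS n lam Lam μ ε θ)
    {b f u : EuclideanSpace ℝ (Fin n) → ℝ} (hs : Sol n lam Lam b f u)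
    {x0 y : EuclideanSpace ℝ (Fin n)} {ρ M η : ℝ} (hρ : 0 < ρ) (hρ1 : ρ ≤ 1) (hM : 0 < M)
    (hη : 16 * ρ < η) (hx0 : ‖x0‖ ≤ 1 - η) (hy : ‖y‖ ≤ 1 - η)
    (hbi : ∀ c, Metric.ball c (16 * ρ) ⊆ Metric.ball 0 1 →
      ∫⁻ x in Metric.ball c (16 * ρ), ENNReal.ofReal (b x) ^ n ≤ ENNReal.ofReal ε)
    {m : ℕ} (hm : 2 ≤ 7 * ρ * m)
    (hfi : ∫⁻ x in Metric.ball 0 1, ENNReal.ofReal (f x) ^ n ≤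
      ENNReal.ofReal (ε * (θ ^ m * M) ^ n))
    (h0 : ∀ x ∈ Metric.ball x0 ρ, M ≤ u x) : θ ^ m * M ≤ u y := by
  have hm0 : (0 : ℝ) < m := by
    by_contra h
    have : (m : ℝ) = 0 := le_antisymm (not_lt.1 h) (Nat.cast_nonneg m)
    rw [this] at hm; linarith
  set z : ℕ → EuclideanSpace ℝ (Fin n) := fun i => x0 + ((i : ℝ) / m) • (y - x0) with hz
  have hzn : ∀ i ≤ m, ‖z i‖ ≤ 1 - η := fun i hi => by
    have h1 : (i : ℝ) / m ≤ 1 := by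
      rw [div_le_one hm0]; exact_mod_cast hi
    have h2 : 0 ≤ (i : ℝ) / m := by positivity
    have h3 := (convex_closedBall (0 : EuclideanSpace ℝ (Fin n)) (1 - η)).add_smul_sub_mem
      (mem_closedBall_zero_iff.2 hx0) (mem_closedBall_zero_iff.2 hy) ⟨h2, h1⟩
    exact mem_closedBall_zero_iff.1 h3
  have hcb : ∀ i ≤ m, Metric.closedBall (z i) (16 * ρ) ⊆ Metric.ball 0 1 := fun i hi x hx => by
    rw [mem_closedBall_iff_norm] at hx
    rw [mem_ball_zero_iff]
    have := hzn i hi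
    calc ‖x‖ = ‖(x - z i) + z i‖ := by congr 1; abel
      _ ≤ ‖x - z i‖ + ‖z i‖ := norm_add_le _ _
      _ < 1 := by linarith
  have hyx : ‖y - x0‖ ≤ 2 := (norm_sub_le _ _).trans (by linarith)
  have main : ∀ i ≤ m, ∀ x ∈ Metric.ball (z i) ρ, θ ^ i * M ≤ u x := by
    intro i
    induction i with
    | zero => intro _ x hx; simpa using h0 x (by simpa [hz] using hx)
    | succ i ih =>
      intro hi x hx
      have hth : θ ^ m ≤ θ ^ i := pow_le_pow_of_le_one hθ.le hθ1.le (by omega)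
      have := hGS b f u hs (z i) ρ (θ ^ i * M) hρ hρ1 (by positivity) (hcb i (by omega))
        (hbi _ (Metric.ball_subset_closedBall.trans (hcb i (by omega))))
        (hfi.trans (ENNReal.ofReal_le_ofReal (by gcongr))) (by
          have : {x ∈ Metric.ball (z i) ρ | u x < θ ^ i * M} = ∅ := by
            rw [Set.eq_empty_iff_forall_notMem]
            rintro w ⟨hw1, hw2⟩
            exact absurd hw2 (not_lt.2 (ih (by omega) w hw1))
          rw [this]; simp) x (by
          rw [mem_ball_iff_norm] at hx ⊢
          have e : z (i + 1) - z i = (1 / (m : ℝ)) • (y - x0) := by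
            simp only [hz]; push_cast
            rw [add_sub_add_left_eq_sub, ← sub_smul]; congr 1; ring
          have h1 : ‖z (i + 1) - z i‖ ≤ 7 * ρ := by
            rw [e, norm_smul, Real.norm_of_nonneg (by positivity), div_mul_eq_mul_div, one_mul,
              div_le_iff₀ hm0]
            linarith
          have := norm_sub_le_norm_sub_add_norm_sub x (z (i + 1)) (z i)
          linarith)
      rw [pow_succ', mul_assoc]; exact this
  have e : z m = y := by
    simp only [hz]; rw [div_self hm0.ne', one_smul]; abel
  exact main m le_rfl y (by rw [e]; exact Metric.mem_ball_self hρ)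

theorem global_interior {n : ℕ} (hn : 0 < n) {lam Lam : ℝ} (hlam : 0 < lam) (hLam : lam ≤ Lam)
    {p q K ν η : ℝ} (hq : (n : ℝ) < q) (hp : (n : ℝ) ≤ p) (hK : 0 < K) (hν : 0 < ν)
    (hη0 : 0 < η) (hη1 : η < 1) :
    ∃ k a : ℝ, 0 < k ∧ 0 < a ∧ ∀ b f u : EuclideanSpace ℝ (Fin n) → ℝ, Sol n lam Lam b f u →
      LpNormE n q b (Metric.ball 0 1) ≤ ENNReal.ofReal K →
      LpNormE n p f (Metric.ball 0 1) ≤ ENNReal.ofReal a →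
      ENNReal.ofReal ν * volume (Metric.ball (0 : EuclideanSpace ℝ (Fin n)) 1)
            ≤ volume {x ∈ Metric.ball (0 : EuclideanSpace ℝ (Fin n)) 1 | 1 - ‖x‖ ≤ u x} →
      ∀ x : EuclideanSpace ℝ (Fin n), ‖x‖ ≤ 1 - η → k ≤ u x := by
  obtain ⟨μ, ε, θ, hμ, -, hε, hθ, hθ1, hGS⟩ := growth_step hn hlam hLam
  have hnn : (0 : ℝ) < n := by exact_mod_cast hn
  have hq0 : 0 < q := hnn.trans hq
  have hω := om_pos n
  set η' := min η (ν / (2 * n)) with hη'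
  have hη'0 : 0 < η' := lt_min hη0 (by positivity)
  have hη'η : η' ≤ η := min_le_left _ _
  have hη'1 : η' < 1 := hη'η.trans_lt hη1
  have hη'ν : n * η' ≤ ν / 2 := by
    calc n * η' ≤ n * (ν / (2 * n)) := by gcongr; exact min_le_right _ _
      _ = ν / 2 := by field_simp
  clear_value η'
  obtain ⟨ρ, hρ0, hρη, hρε⟩ : ∃ ρ : ℝ, 0 < ρ ∧ 16 * ρ < η' ∧
      K ^ n * (om n * (16 * ρ) ^ n) ^ (1 - n / q) ≤ ε := by
    have hs : 0 < 1 - n / q := by rw [sub_pos, div_lt_one hq0]; exact hq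
    have hc : ContinuousAt (fun ρ : ℝ => K ^ n * (om n * (16 * ρ) ^ n) ^ (1 - n / q)) 0 := by
      refine continuousAt_const.mul (ContinuousAt.rpow_const ?_ (Or.inr hs.le))
      fun_prop
    have hv : K ^ n * (om n * (16 * (0 : ℝ)) ^ n) ^ (1 - n / q) = 0 := by
      rw [mul_zero, zero_pow hn.ne', mul_zero, Real.zero_rpow hs.ne', mul_zero]
    have h1 := hc.tendsto.eventually_lt_const (u := ε) (by simpa only [hv] using hε)
    have h2 : ∀ᶠ ρ in nhds (0 : ℝ), 16 * ρ < η' := by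
      have : ContinuousAt (fun ρ : ℝ => 16 * ρ) 0 := by fun_prop
      exact this.tendsto.eventually_lt_const (by simpa using hη'0)
    obtain ⟨ρ, ⟨h3, h4⟩, h5⟩ := (((h1.and h2).filter_mono nhdsWithin_le_nhds).and
      (self_mem_nhdsWithin (s := Set.Ioi (0 : ℝ)))).exists
    exact ⟨ρ, h5, h4, h3.le⟩
  obtain ⟨t, htc, htf, hcov⟩ := (isCompact_closedBall (0 : EuclideanSpace ℝ (Fin n))
    (1 - η')).finite_cover_balls hρ0
  set ν2 := ν / 2 * om n / (htf.toFinset.card + 1) with hν2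
  have hν20 : 0 < ν2 := by positivity
  obtain ⟨N, hN⟩ := interior_growth hn hμ hε hθ hθ1 hGS hν20
  obtain ⟨m, hm⟩ := exists_nat_ge (2 / (7 * ρ))
  rw [div_le_iff₀ (by positivity)] at hm
  set k := θ ^ m * (θ ^ N * η') with hk
  have hk0 : 0 < k := by positivity
  set C := (om n) ^ (1 - n / p) with hC
  have hC0 : 0 < C := Real.rpow_pos_of_pos hω _
  set a := k * min 1 (ε / C) with ha
  have ha0 : 0 < a := by
    have : 0 < min 1 (ε / C) := lt_min one_pos (by positivity)
    positivity
  have haC : a ^ n * C ≤ ε * k ^ n := by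
    have h1 : min 1 (ε / C) ^ n ≤ ε / C := by
      have h0 : 0 ≤ min 1 (ε / C) := le_min (by norm_num) (by positivity)
      exact (pow_le_of_le_one h0 (min_le_left _ _) hn.ne').trans (min_le_right _ _)
    rw [ha, mul_pow]
    calc _ ≤ k ^ n * (ε / C) * C := by gcongr
      _ = _ := by field_simp
  refine ⟨k, a, hk0, ha0, fun b f u hs hbK hfa hvol x hx => ?_⟩
  have hfi : ∫⁻ x in Metric.ball 0 1, ENNReal.ofReal (f x) ^ n ≤ ENNReal.ofReal (ε * k ^ n) := by
    refine (holder_ball hn hp Metric.isOpen_ball.measurableSet hs.2.1 ha0.le hω.le hfa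
      (by rw [vol_ball _ zero_le_one hn]; simp)).trans (ENNReal.ofReal_le_ofReal haC)
  have hbi : ∀ c, Metric.ball c (16 * ρ) ⊆ Metric.ball 0 1 →
      ∫⁻ x in Metric.ball c (16 * ρ), ENNReal.ofReal (b x) ^ n ≤ ENNReal.ofReal ε := by
    intro c hc
    exact (holder_ball hn hq.le Metric.isOpen_ball.measurableSet (hs.1.mono hc) hK.le
      (by positivity) ((LpNormE_mono hq0 b hc).trans hbK)
      (vol_ball c (by positivity) hn).le).trans (ENNReal.ofReal_le_ofReal hρε)
  have hρ1 : ρ ≤ 1 := by linarith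
  obtain ⟨x0, hx0, hx0v⟩ : ∃ x0 ∈ t, ENNReal.ofReal ν2 ≤
      volume {x ∈ Metric.ball x0 ρ | η' ≤ u x} := by
    by_contra hcon
    push Not at hcon
    have h1 : volume {x ∈ Metric.ball (0 : EuclideanSpace ℝ (Fin n)) 1 | 1 - ‖x‖ ≤ u x} ≤
        volume (Metric.ball (0 : EuclideanSpace ℝ (Fin n)) 1 \ Metric.ball 0 (1 - η')) +
        volume (⋃ c ∈ htf.toFinset, {x ∈ Metric.ball c ρ | η' ≤ u x}) := by
      refine (measure_mono ?_).trans (measure_union_le _ _)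
      rintro w ⟨hw1, hw2⟩
      by_cases hw : w ∈ Metric.ball (0 : EuclideanSpace ℝ (Fin n)) (1 - η')
      · right
        obtain ⟨c, hc, hwc⟩ := Set.mem_iUnion₂.1 (hcov (Metric.ball_subset_closedBall hw))
        refine Set.mem_iUnion₂.2 ⟨c, htf.mem_toFinset.2 hc, hwc, ?_⟩
        rw [mem_ball_zero_iff] at hw
        linarith
      · left; exact ⟨hw1, hw⟩
    have h2 : volume (⋃ c ∈ htf.toFinset, {x ∈ Metric.ball c ρ | η' ≤ u x}) ≤
        ENNReal.ofReal (htf.toFinset.card * ν2) := by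
      refine (measure_biUnion_finset_le _ _).trans ?_
      refine (Finset.sum_le_card_nsmul _ _ (ENNReal.ofReal ν2) fun c hc =>
        (hcon c (htf.mem_toFinset.1 hc)).le).trans ?_
      rw [nsmul_eq_mul, ENNReal.ofReal_mul (by positivity)]
      simp
    have h3 : volume (Metric.ball (0 : EuclideanSpace ℝ (Fin n)) 1 \ Metric.ball 0 (1 - η')) ≤
        ENNReal.ofReal (om n * (ν / 2)) := by
      rw [measure_sdiff (Metric.ball_subset_ball (by linarith))
        Metric.isOpen_ball.measurableSet.nullMeasurableSet measure_ball_lt_top.ne,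
        vol_ball _ zero_le_one hn, vol_ball _ (by linarith) hn, ← ENNReal.ofReal_sub _ (by
          have : 0 ≤ 1 - η' := by linarith
          positivity)]
      refine ENNReal.ofReal_le_ofReal ?_
      have hB := one_add_mul_le_pow (a := -η') (by linarith) n
      rw [← sub_eq_add_neg] at hB
      rw [one_pow, mul_one]
      nlinarith
    have h4 := hvol.trans (h1.trans (add_le_add h3 h2))
    rw [vol_ball _ zero_le_one hn, ← ENNReal.ofReal_mul hν.le,
      ← ENNReal.ofReal_add (by positivity) (by positivity),
      ENNReal.ofReal_le_ofReal_iff (by positivity), one_pow, mul_one] at h4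
    have h5 : htf.toFinset.card * ν2 < ν / 2 * om n := by
      rw [hν2, ← mul_div_assoc, div_lt_iff₀ (by positivity)]
      have : 0 < ν / 2 * om n := by positivity
      nlinarith
    linarith
  have hx0n : ‖x0‖ ≤ 1 - η' := mem_closedBall_zero_iff.1 (htc hx0)
  have hcb : Metric.closedBall x0 (16 * ρ) ⊆ Metric.ball 0 1 := fun w hw => by
    rw [mem_closedBall_iff_norm] at hw
    rw [mem_ball_zero_iff]
    calc ‖w‖ = ‖(w - x0) + x0‖ := by congr 1; abel
      _ ≤ ‖w - x0‖ + ‖x0‖ := norm_add_le _ _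
      _ < 1 := by linarith
  have hkle : k ≤ θ ^ N * η' := by
    have : θ ^ m ≤ 1 := pow_le_one₀ hθ.le hθ1.le
    have h2 : 0 < θ ^ N * η' := by positivity
    rw [hk]; nlinarith
  have hstart := hN b f u hs x0 ρ η' hρ0 hρ1 hη'0 hcb
    (hbi _ (Metric.ball_subset_closedBall.trans hcb))
    (hfi.trans (ENNReal.ofReal_le_ofReal (by gcongr))) hx0v
  exact chain hμ hε hθ hθ1 hGS hs hρ0 hρ1 (M := θ ^ N * η') (by positivity) hρη hx0n
    (by linarith) hbi (by linarith) hfi hstart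

/-- radial part of the boundary barrier -/
noncomputable def bar1 (n : ℕ) (m P c0 : ℝ) : EuclideanSpace ℝ (Fin n) → ℝ :=
  fun y => (fun σ => m * (1 - σ) + P * (1 - σ) ^ 2 + c0) (‖y - 0‖ ^ 2)

/-- localizing part of the boundary barrier -/
noncomputable def bar2 (n : ℕ) (Q : ℝ) (z : EuclideanSpace ℝ (Fin n)) :
    EuclideanSpace ℝ (Fin n) → ℝ :=
  fun y => (fun σ => Q * σ) (‖y - z‖ ^ 2)

theorem bar1_contDiff (n : ℕ) (m P c0 : ℝ) : ContDiff ℝ 2 (bar1 n m P c0) := by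
  have h : ContDiff ℝ 2 (fun y : EuclideanSpace ℝ (Fin n) => ‖y - 0‖ ^ 2) :=
    (contDiff_id.sub contDiff_const).norm_sq ℝ
  have h2 : ContDiff ℝ 2 (fun y : EuclideanSpace ℝ (Fin n) => 1 - ‖y - 0‖ ^ 2) :=
    contDiff_const.sub h
  exact ((contDiff_const.mul h2).add (contDiff_const.mul (h2.pow 2))).add contDiff_const

theorem bar2_contDiff (n : ℕ) (Q : ℝ) (z : EuclideanSpace ℝ (Fin n)) :
    ContDiff ℝ 2 (bar2 n Q z) := by
  have h : ContDiff ℝ 2 (fun y : EuclideanSpace ℝ (Fin n) => ‖y - z‖ ^ 2) :=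
    (contDiff_id.sub contDiff_const).norm_sq ℝ
  exact contDiff_const.mul h

theorem bar1_deriv (m P c0 σ : ℝ) :
    HasDerivAt (fun σ : ℝ => m * (1 - σ) + P * (1 - σ) ^ 2 + c0) (-m - 2 * P * (1 - σ)) σ := by
  have h1 : HasDerivAt (fun σ : ℝ => 1 - σ) (-1) σ := by
    simpa using (hasDerivAt_id σ).const_sub 1
  have h2 := (((h1.const_mul m).add ((h1.pow 2).const_mul P)).add_const c0)
  refine h2.congr_deriv ?_
  simp; ring

theorem bar1_deriv2 (m P σ : ℝ) :
    HasDerivAt (fun σ : ℝ => -m - 2 * P * (1 - σ)) (2 * P) σ := by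
  have h1 : HasDerivAt (fun σ : ℝ => 1 - σ) (-1) σ := by
    simpa using (hasDerivAt_id σ).const_sub 1
  refine ((h1.const_mul (2 * P)).const_sub (-m)).congr_deriv ?_
  ring

theorem bar2_deriv (Q σ : ℝ) : HasDerivAt (fun σ : ℝ => Q * σ) Q σ := by
  simpa using (hasDerivAt_id σ).const_mul Q

theorem hopf_barrier {n : ℕ} {lam Lam : ℝ} {B : Matrix (Fin n) (Fin n) ℝ} (hB : Adm n lam Lam B)
    {m P c0 Q : ℝ} (hm : 0 ≤ m) (hP : 0 ≤ P) (hQ : 0 ≤ Q) (x z : EuclideanSpace ℝ (Fin n))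
    (hx : 0 ≤ 1 - ‖x‖ ^ 2) :
    lam * (8 * P) * ‖x‖ ^ 2 + Lam * n * (-2 * m - 4 * P * (1 - ‖x‖ ^ 2) - 2 * Q) ≤
      (B * hess n (bar1 n m P c0 - bar2 n Q z) x).trace := by
  rw [hess_sub (bar1_contDiff n m P c0).contDiffAt (bar2_contDiff n Q z).contDiffAt]
  have e1 : hess n (bar1 n m P c0) x = _ :=
    radial_hess (bar1_deriv m P c0) (bar1_deriv2 m P) 0 x
  have e2 : hess n (bar2 n Q z) x = _ :=
    radial_hess (G'' := fun _ => 0) (bar2_deriv Q) (fun σ => hasDerivAt_const σ Q) z x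
  rw [e1, e2]
  simp only [sub_zero, mul_zero, zero_smul, zero_add]
  rw [add_sub_assoc, ← sub_smul]
  refine le_trans (le_of_eq ?_) (adm_radial hB (c1 := 4 * (2 * P)) (by positivity) ?_ x)
  · ring
  · nlinarith [mul_nonneg hP hx]

theorem hopf_grad {n : ℕ} {m P c0 Q : ℝ} (hm : 0 ≤ m) (hP : 0 ≤ P) (hQ : 0 ≤ Q)
    (x z : EuclideanSpace ℝ (Fin n)) (hx : 0 ≤ 1 - ‖x‖ ^ 2) :
    ‖fderiv ℝ (bar1 n m P c0 - bar2 n Q z) x‖ ≤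
      2 * (m + 2 * P * (1 - ‖x‖ ^ 2)) * ‖x‖ + 2 * Q * ‖x - z‖ := by
  have d1 : DifferentiableAt ℝ (bar1 n m P c0) x :=
    (bar1_contDiff n m P c0).contDiffAt.differentiableAt (by norm_num)
  have d2 : DifferentiableAt ℝ (bar2 n Q z) x :=
    (bar2_contDiff n Q z).contDiffAt.differentiableAt (by norm_num)
  rw [fderiv_sub d1 d2]
  refine (norm_sub_le _ _).trans (le_of_eq ?_)
  have e1 : ‖fderiv ℝ (bar1 n m P c0) x‖ = _ := radial_grad_norm (bar1_deriv m P c0) 0 x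
  have e2 : ‖fderiv ℝ (bar2 n Q z) x‖ = _ := radial_grad_norm (bar2_deriv Q) z x
  rw [e1, e2]
  simp only [sub_zero]
  rw [abs_of_nonpos (by nlinarith [mul_nonneg hP hx]), abs_of_nonneg hQ]
  ring

/-- the comparison function near the boundary -/
noncomputable def phi (n : ℕ) (B : ℝ) (x : EuclideanSpace ℝ (Fin n)) : ℝ :=
  (1 - ‖x‖ ^ 2) + B * (1 - ‖x‖ ^ 2) ^ 2

theorem phi_bounds {n : ℕ} {B t : ℝ} (hB : 0 < B) (htB : 4 * B * t ≤ 1) (x : EuclideanSpace ℝ (Fin n))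
    (h0 : 0 ≤ 1 - ‖x‖) (h1 : 1 - ‖x‖ ≤ t) :
    1 - ‖x‖ ≤ phi n B x ∧ phi n B x ≤ 4 * (1 - ‖x‖) ∧ B * (1 - ‖x‖ ^ 2) ≤ 1 / 2 := by
  have hx := norm_nonneg x
  unfold phi
  set d := 1 - ‖x‖ with hd
  have e : 1 - ‖x‖ ^ 2 = d * (1 + ‖x‖) := by rw [hd]; ring
  have hs1 : d ≤ 1 - ‖x‖ ^ 2 := by rw [e]; nlinarith
  have hs2 : 1 - ‖x‖ ^ 2 ≤ 2 * d := by rw [e]; nlinarith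
  set s := 1 - ‖x‖ ^ 2
  clear_value s d
  have hBs : B * s ≤ 1 / 2 := by nlinarith
  refine ⟨by nlinarith [sq_nonneg s], ?_, hBs⟩
  nlinarith [sq_nonneg s]

/-- final algebra of the Hopf estimate -/
theorem hopf_alg {n : ℕ} (hn : 0 < n) {S m t α ω Y c L : ℝ} (hS : 0 < S) (hm : 0 < m) (ht : 0 < t)
    (hω : 0 < ω) (hc : 0 < c) (hY : 0 ≤ Y) (hL : 0 < L) {a' : ℝ} (ha' : a' = c * S / t ^ 2)
    (h : ω * t ^ n ≤ 2 ^ n * ((1 / a') ^ n * m ^ n * (Y * (ω * (L * t) ^ n) ^ α))) :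
    S ≤ 2 / c * (1 + Y * (ω * L ^ n) ^ α / ω) * (t * t ^ α) * m := by
  have hta : 0 < t ^ α := Real.rpow_pos_of_pos ht _
  have hV : (ω * (L * t) ^ n) ^ α = (ω * L ^ n) ^ α * (t ^ α) ^ n := by
    rw [mul_pow, ← mul_assoc, Real.mul_rpow (by positivity) (by positivity)]
    congr 1
    rw [← Real.rpow_natCast, ← Real.rpow_natCast, ← Real.rpow_mul ht.le, ← Real.rpow_mul ht.le,
      mul_comm]
  have hZ0 : 0 ≤ (ω * L ^ n) ^ α := by positivity
  rw [hV] at h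
  set Z := (ω * L ^ n) ^ α
  set T := t ^ α
  clear_value Z T
  have hW : 0 ≤ Y * Z / ω := by positivity
  set W := Y * Z / ω with hWd
  have h2 : (S * c) ^ n ≤ (2 * t * T * m) ^ n * W := by
    have e1 : (1 / a') ^ n = (t ^ n * t ^ n) / (S * c) ^ n := by
      rw [ha', one_div_div, div_pow]; congr 1
      · rw [← mul_pow]; congr 1; ring
      · congr 1; ring
    rw [e1] at h
    have hSc : 0 < (S * c) ^ n := by positivity
    have h3 : (S * c) ^ n * (ω * t ^ n) ≤ (2 ^ n * t ^ n * T ^ n * m ^ n) * (Y * Z) * t ^ n := by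
      calc _ ≤ (S * c) ^ n * (2 ^ n * ((t ^ n * t ^ n) / (S * c) ^ n * m ^ n * (Y * (Z * T ^ n)))) := by
            gcongr
        _ = _ := by field_simp
    rw [← mul_assoc] at h3
    have h4 := le_of_mul_le_mul_right h3 (by positivity)
    rw [mul_pow (2 * t * T), mul_pow (2 * t), mul_pow 2, hWd, ← mul_div_assoc, le_div_iff₀ hω]
    exact h4
  have h3 : W ≤ (1 + W) ^ n := by
    calc W ≤ 1 + W := by linarith
      _ ≤ (1 + W) ^ n := le_self_pow₀ (by linarith) hn.ne'
  have h4 : (S * c) ^ n ≤ (2 * t * T * m * (1 + W)) ^ n := by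
    rw [mul_pow _ (1 + W)]
    exact h2.trans (by gcongr)
  have h5 := le_of_pow_le_pow_left₀ hn.ne' (by positivity) h4
  have e : 2 / c * (1 + W) * (t * T) * m = (2 * t * T * m * (1 + W)) / c := by field_simp
  rw [e, le_div_iff₀ hc]
  exact h5

set_option maxHeartbeats 2000000 in
theorem hopf_core {n : ℕ} (hn : 0 < n) {lam Lam : ℝ} (hlam : 0 < lam) (hLam : lam ≤ Lam)
    {q K L a2 G Bc : ℝ} (hq : (n : ℝ) < q) (hK : 0 < K) (hL : 0 < L)
    (hL2 : L ^ 2 * lam = 64 * (Lam * n)) (ha2 : a2 * (32 * (Lam * n)) = lam)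
    (hBc : Bc * lam = 2 * (Lam * n)) (hG : G = 6 + 8 / L + 4 * a2 * (L + 1))
    {t d0 : ℝ} (ht : 0 < t) (htT : 8 * (Lam * n) * t ≤ lam) (htd : t ≤ d0)
    {b f u : EuclideanSpace ℝ (Fin n) → ℝ} (hs : Sol n lam Lam b f u)
    (hbK : LpNormE n q b (Metric.ball 0 1) ≤ ENNReal.ofReal K) {m : ℝ} (hm : 0 < m)
    (hfm : LpNormE n q f {x ∈ Metric.ball (0 : EuclideanSpace ℝ (Fin n)) 1 | 1 - ‖x‖ < d0} ≤
      ENNReal.ofReal m)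
    (hbd : ∀ x : EuclideanSpace ℝ (Fin n), 1 - ‖x‖ = t → m * phi n Bc x ≤ u x)
    {S : ℝ} (hS : 0 < S) (hS4 : S ≤ 4 * m * t)
    (hSv : ∀ x : EuclideanSpace ℝ (Fin n), 0 < 1 - ‖x‖ → 1 - ‖x‖ < t → m * phi n Bc x - u x ≤ S)
    {z : EuclideanSpace ℝ (Fin n)} (hz0 : 0 < 1 - ‖z‖) (hzt : 1 - ‖z‖ < t)
    (hzv : 7 / 8 * S < m * phi n Bc z - u z) :
    S ≤ 2 / (a2 * (lam * n)) * (1 + (1 + (G * K) ^ n) * (om n * L ^ n) ^ (1 - n / q) / om n) *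
      (t * t ^ (1 - n / q)) * m := by
  have hnn : (0 : ℝ) < n := by exact_mod_cast hn
  have hn1 : (1 : ℝ) ≤ n := by exact_mod_cast hn
  have hq0 : 0 < q := hnn.trans hq
  have hLam0 : 0 < Lam := hlam.trans_le hLam
  have hω := om_pos n
  have hLn : 0 < Lam * n := by positivity
  have hlamLn : lam ≤ Lam * n := by nlinarith only [hLam, hn1, hLam0]
  have ha20 : 0 < a2 := by
    by_contra h
    nlinarith only [not_lt.1 h, ha2, hLn, hlam]
  have ha232 : a2 ≤ 1 / 32 := by
    by_contra h
    nlinarith only [not_le.1 h, ha2, hLn, hlamLn]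
  have hBc0 : 0 < Bc := by
    by_contra h
    nlinarith only [not_lt.1 h, hBc, hLn, hlam]
  have htB : 4 * Bc * t ≤ 1 := by
    by_contra h
    have h1 := mul_lt_mul_of_pos_right (not_le.1 h) hlam
    have h2 : 4 * Bc * t * lam = 4 * t * (Bc * lam) := by ring
    rw [h2, hBc] at h1
    linarith only [h1, htT]
  have ht8 : t ≤ 1 / 8 := by
    by_contra h
    nlinarith only [not_le.1 h, htT, hlamLn, hlam]
  have hG0 : 0 < G := by rw [hG]; positivity
  obtain ⟨hb, hf, hb0, hf0, hu, hu0, hpde⟩ := hs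
  set R := L * t with hR
  have hR0 : 0 < R := by positivity
  set Q := S / R ^ 2 with hQ
  have hQ0 : 0 < Q := by positivity
  have hQR : Q * R ^ 2 = S := by rw [hQ]; field_simp
  set P := m * Bc + S / (16 * t ^ 2) with hP
  have hP0 : 0 < P := by positivity
  set a := a2 * S / t ^ 2 with ha
  have ha0 : 0 < a := by positivity
  have hat : a * t ^ 2 = a2 * S := by rw [ha]; field_simp
  set Φ : EuclideanSpace ℝ (Fin n) → ℝ := bar1 n m P (-(S / 4)) - bar2 n Q z with hΦ
  have hΦc : ContDiff ℝ 2 Φ := (bar1_contDiff _ _ _ _).sub (bar2_contDiff _ _ _)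
  have hΦx : ∀ x, Φ x = m * phi n Bc x + S / (16 * t ^ 2) * (1 - ‖x‖ ^ 2) ^ 2 - S / 4 -
      Q * ‖x - z‖ ^ 2 := fun x => by
    simp only [hΦ, Pi.sub_apply, bar1, bar2, sub_zero, phi]
    rw [hP]; ring
  have hs2 : ∀ x : EuclideanSpace ℝ (Fin n), 0 ≤ 1 - ‖x‖ → 1 - ‖x‖ ≤ t →
      0 ≤ 1 - ‖x‖ ^ 2 ∧ 1 - ‖x‖ ^ 2 ≤ 2 * t := fun x h0 h1 => by
    have hx := norm_nonneg x
    have e : 1 - ‖x‖ ^ 2 = (1 - ‖x‖) * (1 + ‖x‖) := by ring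
    rw [e]
    constructor
    · positivity
    · nlinarith only [h0, h1, hx]
  have hΦle : ∀ x : EuclideanSpace ℝ (Fin n), 0 ≤ 1 - ‖x‖ → 1 - ‖x‖ ≤ t →
      Φ x ≤ m * phi n Bc x - Q * ‖x - z‖ ^ 2 := fun x h0 h1 => by
    obtain ⟨h2, h3⟩ := hs2 x h0 h1
    have h4 : (1 - ‖x‖ ^ 2) ^ 2 ≤ (2 * t) ^ 2 := by gcongr
    have h5 : S / (16 * t ^ 2) * (1 - ‖x‖ ^ 2) ^ 2 ≤ S / 4 := by
      calc _ ≤ S / (16 * t ^ 2) * (2 * t) ^ 2 := by gcongr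
        _ = S / 4 := by field_simp; norm_num
    rw [hΦx]; linarith only [h5]
  set τ := min (S / (32 * m)) ((1 - ‖z‖) / 2) with hτ
  have hτ0 : 0 < τ := lt_min (by positivity) (by linarith)
  have hτS : 4 * m * τ ≤ S / 8 := by
    calc 4 * m * τ ≤ 4 * m * (S / (32 * m)) := by gcongr; exact min_le_left _ _
      _ = S / 8 := by field_simp; norm_num
  have hτz : τ < 1 - ‖z‖ := (min_le_right _ _).trans_lt (by linarith)
  clear_value τ
  set KK : Set (EuclideanSpace ℝ (Fin n)) := Metric.closedBall z R ∩ {x | τ ≤ 1 - ‖x‖ ∧ 1 - ‖x‖ ≤ t}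
    with hKK
  set U : Set (EuclideanSpace ℝ (Fin n)) := Metric.ball z R ∩ {x | τ < 1 - ‖x‖ ∧ 1 - ‖x‖ < t}
    with hU
  have hcn : Continuous fun x : EuclideanSpace ℝ (Fin n) => 1 - ‖x‖ := by fun_prop
  have hKKc : IsCompact KK := (isCompact_closedBall z R).inter_right
    ((isClosed_le continuous_const hcn).inter (isClosed_le hcn continuous_const))
  have hUo : IsOpen U := Metric.isOpen_ball.inter
    ((isOpen_lt continuous_const hcn).inter (isOpen_lt hcn continuous_const))
  have hUK : U ⊆ KK := fun x hx => ⟨Metric.ball_subset_closedBall hx.1, hx.2.1.le, hx.2.2.le⟩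
  have hK1 : KK ⊆ Metric.ball 0 1 := fun x hx => by
    rw [mem_ball_zero_iff]; linarith [hx.2.1]
  have hU1 : U ⊆ Metric.ball 0 1 := hUK.trans hK1
  have hzU : z ∈ U := ⟨Metric.mem_ball_self hR0, hτz, hzt⟩
  have hhz : (u - Φ) z + a / 2 * t ^ 2 < -(S / 2) := by
    have h1 : 0 ≤ S / (16 * t ^ 2) * (1 - ‖z‖ ^ 2) ^ 2 := by positivity
    have h2 : a / 2 * t ^ 2 ≤ S / 64 := by nlinarith only [hat, ha232, hS]
    simp only [Pi.sub_apply, hΦx, sub_self, norm_zero]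
    linarith only [h1, h2, hzv, hS]
  have hSt : S / t ≤ 4 * m := by rw [div_le_iff₀ ht]; exact hS4
  have key := key_lemma hn hlam hLam hKKc hUo hUK
    (hu.mono hU1) hΦc.contDiffOn
    ((hu.continuousOn.mono hK1).sub hΦc.continuous.continuousOn) hzU (ρ := t) (D := R) ha0
    Set.inter_subset_left
    (fun x hx hxU => by
      refine hhz.trans_le ?_
      obtain ⟨hx1, hx2, hx3⟩ := hx
      rw [mem_closedBall_iff_norm] at hx1
      have hle := hΦle x (by linarith) hx3
      have hux := hu0 x (hK1 ⟨mem_closedBall_iff_norm.2 hx1, hx2, hx3⟩)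
      have hQx : 0 ≤ Q * ‖x - z‖ ^ 2 := by positivity
      simp only [Pi.sub_apply]
      rcases hx3.lt_or_eq with h3 | h3
      · rcases hx2.lt_or_eq with h2 | h2
        · have h4 : ‖x - z‖ = R := by
            refine le_antisymm hx1 (not_lt.1 fun h => hxU ⟨mem_ball_iff_norm.2 h, h2, h3⟩)
          have h5 := hSv x (by linarith) h3
          rw [h4, hQR] at hle
          linarith
        · have h5 := (phi_bounds hBc0 htB x (by linarith) hx3).2.1
          rw [← h2] at h5
          have h6 : m * phi n Bc x ≤ m * (4 * τ) := by gcongr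
          linarith
      · have h5 := hbd x h3
        linarith)
    (fun x => f x + b x * (G * m)) (fun _ => a * (Lam * n)) U
    (fun x hx _ _ => hx)
    (fun x hx _ _ h2 => by
      have h3 := hpde x (hU1 hx)
      have hbx := hb0 x (hU1 hx)
      have hud : DifferentiableAt ℝ u x :=
        (hu.contDiffAt (Metric.isOpen_ball.mem_nhds (hU1 hx))).differentiableAt (by norm_num)
      have hΦd : DifferentiableAt ℝ Φ x := hΦc.contDiffAt.differentiableAt (by norm_num)
      have e : fderiv ℝ u x = fderiv ℝ (u - Φ) x + fderiv ℝ Φ x := by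
        rw [fderiv_sub hud hΦd]; simp
      obtain ⟨hx1, hx2, hx3⟩ := hx
      rw [mem_ball_iff_norm] at hx1
      obtain ⟨hsx0, hsx1⟩ := hs2 x (by linarith) hx3.le
      have hBs := (phi_bounds hBc0 htB x (by linarith) hx3.le).2.2
      have h4 := hopf_grad (c0 := -(S / 4)) hm.le hP0.le hQ0.le x z hsx0
      have h5 : gradNorm n u x ≤ G * m := by
        unfold gradNorm
        rw [e]
        refine (norm_add_le _ _).trans ((add_le_add h2 h4).trans ?_)
        have hPs : P * (1 - ‖x‖ ^ 2) ≤ m := by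
          have h6 : S / (16 * t ^ 2) * (1 - ‖x‖ ^ 2) ≤ m / 2 := by
            calc _ ≤ S / (16 * t ^ 2) * (2 * t) := by gcongr
              _ = S / t / 8 := by field_simp; norm_num
              _ ≤ _ := by linarith
          have h7 : m * (Bc * (1 - ‖x‖ ^ 2)) ≤ m * (1 / 2) := by gcongr
          rw [hP]; linarith
        have hA : 2 * (m + 2 * P * (1 - ‖x‖ ^ 2)) * ‖x‖ ≤ 6 * m := by
          have hx1 : ‖x‖ ≤ 1 := by linarith
          have h8 : 0 ≤ P * (1 - ‖x‖ ^ 2) := by positivity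
          calc _ ≤ 2 * (m + 2 * P * (1 - ‖x‖ ^ 2)) * 1 := by
                refine mul_le_mul_of_nonneg_left hx1 ?_
                linarith
            _ ≤ _ := by linarith
        have hB : 2 * Q * ‖x - z‖ ≤ 8 / L * m := by
          calc 2 * Q * ‖x - z‖ ≤ 2 * Q * R := by gcongr
            _ = 2 / L * (S / t) := by rw [hQ, hR]; field_simp
            _ ≤ 2 / L * (4 * m) := by gcongr
            _ = _ := by ring
        have hC : a * (R + t) ≤ 4 * a2 * (L + 1) * m := by
          calc a * (R + t) = a2 * (L + 1) * (S / t) := by rw [ha, hR]; field_simp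
            _ ≤ a2 * (L + 1) * (4 * m) := by gcongr
            _ = _ := by ring
        rw [hG]
        linarith
      have := mul_le_mul_of_nonneg_left h5 hbx
      linarith)
    (fun x hx _ B hB => by
      obtain ⟨hx1, hx2, hx3⟩ := hx
      obtain ⟨hsx0, hsx1⟩ := hs2 x (by linarith) hx3.le
      refine le_trans ?_ (hopf_barrier hB hm.le hP0.le hQ0.le x z hsx0)
      have hxs : 1 / 2 ≤ ‖x‖ ^ 2 := by linarith
      have h1 : 4 * (Lam * n) * (1 - ‖x‖ ^ 2) ≤ lam := by
        calc _ ≤ 4 * (Lam * n) * (2 * t) := by gcongr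
          _ ≤ _ := by linarith
      have h2 : P * (4 * (Lam * n) * (1 - ‖x‖ ^ 2)) ≤ P * lam := by gcongr
      have h3 : lam * (8 * P) * (1 / 2) ≤ lam * (8 * P) * ‖x‖ ^ 2 := by gcongr
      set w := S / t ^ 2 with hw
      have hw0 : 0 < w := by positivity
      have h4 : P * lam = 2 * m * (Lam * n) + w * lam / 16 := by
        have : S / (16 * t ^ 2) = w / 16 := by rw [hw]; field_simp
        rw [hP, this]; linear_combination m * hBc
      have h5 : Lam * n * Q = w * lam / 64 := by
        have : Q = w / L ^ 2 := by rw [hQ, hw, hR]; field_simp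
        rw [this, ← mul_div_assoc, div_eq_div_iff (by positivity) (by norm_num)]
        linear_combination -w * hL2
      have h6 : a * (Lam * n) = w * lam / 32 := by
        have : a = a2 * w := by rw [ha, hw]; ring
        rw [this]; linear_combination w / 32 * ha2
      have h7 : 0 < w * lam := by positivity
      have h8 : 0 < m * (Lam * n) := by positivity
      linarith only [h2, h3, h4, h5, h6, h7, h8])
  have hUm : MeasurableSet U := hUo.measurableSet
  have hintr : ∀ x, ((f x + b x * (G * m) - a * (Lam * n)) / a + Lam * n) / (lam * n) =
      (1 / (a * (lam * n))) * f x + (1 / (a * (lam * n)) * (G * m)) * b x := fun x => by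
    field_simp; ring
  simp only [hintr] at key
  have hUL : U ⊆ {x ∈ Metric.ball (0 : EuclideanSpace ℝ (Fin n)) 1 | 1 - ‖x‖ < d0} := fun x hx =>
    ⟨hU1 hx, hx.2.2.trans_le htd⟩
  have hVU : volume U ≤ ENNReal.ofReal (om n * (L * t) ^ n) :=
    (measure_mono Set.inter_subset_left).trans (vol_ball z hR0.le hn).le
  have hV0 : 0 ≤ om n * (L * t) ^ n := by positivity
  have hfI := holder_ball hn hq.le hUm (hf.mono hU1) hm.le hV0
    ((LpNormE_mono hq0 f hUL).trans hfm) hVU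
  have hbI := holder_ball hn hq.le hUm (hb.mono hU1) hK.le hV0
    ((LpNormE_mono hq0 b hU1).trans hbK) hVU
  have hα0 : 0 ≤ 1 / (a * (lam * n)) := by positivity
  have key2 := key.trans (lint_split hUm (hf.mono hU1) (b := b) hα0 (by positivity))
  set Z := (om n * (L * t) ^ n) ^ (1 - n / q) with hZ
  have hZ0 : 0 ≤ Z := by positivity
  have key3 : om n * t ^ n ≤ 2 ^ n * ((1 / (a * (lam * n))) ^ n * (m ^ n * Z)) +
      2 ^ n * ((1 / (a * (lam * n)) * (G * m)) ^ n * (K ^ n * Z)) := by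
    rw [← ENNReal.ofReal_le_ofReal_iff (by positivity), ← vol_ball z ht.le hn]
    refine key2.trans ?_
    rw [ENNReal.ofReal_add (by positivity) (by positivity), ENNReal.ofReal_mul (by positivity),
      ENNReal.ofReal_mul (p := (1 / (a * (lam * n))) ^ n) (by positivity),
      ENNReal.ofReal_mul (p := 2 ^ n) (q := (1 / (a * (lam * n)) * (G * m)) ^ n * (K ^ n * Z)) (by positivity),
      ENNReal.ofReal_mul (p := (1 / (a * (lam * n)) * (G * m)) ^ n) (by positivity)]
    have e2 : ENNReal.ofReal ((2 : ℝ) ^ n) = 2 ^ n := by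
      rw [ENNReal.ofReal_pow (by norm_num)]; simp
    rw [e2]
    gcongr
  refine hopf_alg hn hS hm ht hω (by positivity) (by positivity) hL (a' := a * (lam * n))
    (by rw [ha]; ring) (key3.trans (le_of_eq ?_))
  rw [← hZ, mul_pow _ (G * m), mul_pow G m, mul_pow G K]; ring

theorem hopf_layer {n : ℕ} (hn : 0 < n) {lam Lam : ℝ} (hlam : 0 < lam) (hLam : lam ≤ Lam)
    {q K : ℝ} (hq : (n : ℝ) < q) (hK : 0 < K) :
    ∃ C Bc : ℝ, 0 < C ∧ 0 < Bc ∧ Bc * lam = 2 * (Lam * n) ∧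
    ∀ t d0 : ℝ, 0 < t → 8 * (Lam * n) * t ≤ lam → t ≤ d0 →
    ∀ b f u : EuclideanSpace ℝ (Fin n) → ℝ, Sol n lam Lam b f u →
    LpNormE n q b (Metric.ball 0 1) ≤ ENNReal.ofReal K → ∀ m : ℝ, 0 < m →
    LpNormE n q f {x ∈ Metric.ball (0 : EuclideanSpace ℝ (Fin n)) 1 | 1 - ‖x‖ < d0} ≤
      ENNReal.ofReal m →
    (∀ x : EuclideanSpace ℝ (Fin n), 1 - ‖x‖ = t → m * phi n Bc x ≤ u x) →
    ∀ x : EuclideanSpace ℝ (Fin n), 0 < 1 - ‖x‖ → 1 - ‖x‖ < t →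
      m * phi n Bc x - C * (t * t ^ (1 - n / q)) * m ≤ u x := by
  have hnn : (0 : ℝ) < n := by exact_mod_cast hn
  have hLam0 : 0 < Lam := hlam.trans_le hLam
  have hω := om_pos n
  have hLn : 0 < Lam * n := by positivity
  set L := Real.sqrt (64 * (Lam * n) / lam) with hLdef
  have hL : 0 < L := Real.sqrt_pos.2 (by positivity)
  have hL2 : L ^ 2 * lam = 64 * (Lam * n) := by
    rw [hLdef, Real.sq_sqrt (by positivity)]; field_simp
  set a2 := lam / (32 * (Lam * n)) with ha2def
  have ha2 : a2 * (32 * (Lam * n)) = lam := by rw [ha2def]; field_simp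
  have ha20 : 0 < a2 := by positivity
  set Bc := 2 * (Lam * n) / lam with hBcdef
  have hBc : Bc * lam = 2 * (Lam * n) := by rw [hBcdef]; field_simp
  have hBc0 : 0 < Bc := by positivity
  set G := 6 + 8 / L + 4 * a2 * (L + 1) with hG
  have hG0 : 0 < G := by positivity
  clear_value L a2 Bc
  set C := 2 / (a2 * (lam * n)) * (1 + (1 + (G * K) ^ n) * (om n * L ^ n) ^ (1 - n / q) / om n)
    with hC
  have hC0 : 0 < C := by positivity
  refine ⟨C, Bc, hC0, hBc0, hBc, ?_⟩
  intro t d0 ht htT htd b f u hs hbK m hm hfm hbd w hw0 hwt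
  by_contra hcon
  have htB : 4 * Bc * t ≤ 1 := by
    by_contra h
    have h1 := mul_lt_mul_of_pos_right (not_le.1 h) hlam
    have h2 : 4 * Bc * t * lam = 4 * t * (Bc * lam) := by ring
    rw [h2, hBc] at h1
    linarith only [h1, htT]
  set V := (fun x : EuclideanSpace ℝ (Fin n) => m * phi n Bc x - u x) ''
    {x | 0 < 1 - ‖x‖ ∧ 1 - ‖x‖ < t} with hV
  have hub : ∀ y ∈ V, y ≤ 4 * m * t := by
    rintro y ⟨x, ⟨hx0, hxt⟩, rfl⟩
    have h1 := (phi_bounds hBc0 htB x hx0.le hxt.le).2.1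
    have h2 : 0 ≤ u x := hs.2.2.2.2.2.1 x (by rw [mem_ball_zero_iff]; linarith)
    have h3 : m * phi n Bc x ≤ m * (4 * t) := by
      apply mul_le_mul_of_nonneg_left _ hm.le; linarith
    simp only
    linarith
  have hbdd : BddAbove V := ⟨_, hub⟩
  have hwV : m * phi n Bc w - u w ∈ V := ⟨w, ⟨hw0, hwt⟩, rfl⟩
  have hwS := le_csSup hbdd hwV
  have hpos : 0 < C * (t * t ^ (1 - n / q)) * m := by positivity
  have hlt : C * (t * t ^ (1 - n / q)) * m < sSup V := by linarith [not_le.1 hcon]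
  have hS0 : 0 < sSup V := hpos.trans hlt
  obtain ⟨y, ⟨z, ⟨hz0, hzt⟩, rfl⟩, hzv⟩ :=
    exists_lt_of_lt_csSup ⟨_, hwV⟩ (show 7 / 8 * sSup V < sSup V by linarith)
  have := hopf_core hn hlam hLam hq hK hL hL2 ha2 hBc hG ht htT htd hs hbK hm hfm hbd hS0
    (csSup_le ⟨_, hwV⟩ hub) (fun x h0 h1 => le_csSup hbdd ⟨x, ⟨h0, h1⟩, rfl⟩) hz0 hzt hzv
  rw [← hC] at this
  linarith

theorem hopf_iter {n : ℕ} {lam Lam : ℝ} (hlam : 0 < lam)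
    {q K : ℝ} {C Bc al : ℝ} (hal : 0 < al) (hC : 0 < C) (hBc : 0 < Bc) (hBl : Bc * lam = 2 * (Lam * n))
    (hlay : ∀ t d0 : ℝ, 0 < t → 8 * (Lam * n) * t ≤ lam → t ≤ d0 →
    ∀ b f u : EuclideanSpace ℝ (Fin n) → ℝ, Sol n lam Lam b f u →
    LpNormE n q b (Metric.ball 0 1) ≤ ENNReal.ofReal K → ∀ m : ℝ, 0 < m →
    LpNormE n q f {x ∈ Metric.ball (0 : EuclideanSpace ℝ (Fin n)) 1 | 1 - ‖x‖ < d0} ≤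
      ENNReal.ofReal m →
    (∀ x : EuclideanSpace ℝ (Fin n), 1 - ‖x‖ = t → m * phi n Bc x ≤ u x) →
    ∀ x : EuclideanSpace ℝ (Fin n), 0 < 1 - ‖x‖ → 1 - ‖x‖ < t →
      m * phi n Bc x - C * (t * t ^ al) * m ≤ u x)
    {t0 d0 : ℝ} (ht0 : 0 < t0) (htT : 8 * (Lam * n) * t0 ≤ lam) (htd : t0 ≤ d0)
    (hts : 4 * C * t0 ^ al ≤ 1 - (1 / 2 : ℝ) ^ al)
    {b f u : EuclideanSpace ℝ (Fin n) → ℝ} (hs : Sol n lam Lam b f u)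
    (hbK : LpNormE n q b (Metric.ball 0 1) ≤ ENNReal.ofReal K) {m : ℝ} (hm : 0 < m)
    (hfm : LpNormE n q f {x ∈ Metric.ball (0 : EuclideanSpace ℝ (Fin n)) 1 | 1 - ‖x‖ < d0} ≤
      ENNReal.ofReal (m / 2))
    (hbd : ∀ x : EuclideanSpace ℝ (Fin n), 1 - ‖x‖ = t0 → m * phi n Bc x ≤ u x) (j : ℕ) :
    ∀ x : EuclideanSpace ℝ (Fin n), t0 * (1 / 2) ^ j ≤ 1 - ‖x‖ → 1 - ‖x‖ ≤ t0 →
      m / 2 * (1 + ((1 / 2 : ℝ) ^ al) ^ j) * phi n Bc x ≤ u x := by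
  have htB : 4 * Bc * t0 ≤ 1 := by
    by_contra h
    have h1 := mul_lt_mul_of_pos_right (not_le.1 h) hlam
    have h2 : 4 * Bc * t0 * lam = 4 * t0 * (Bc * lam) := by ring
    rw [h2, hBl] at h1
    linarith only [h1, htT]
  set r := (1 / 2 : ℝ) ^ al with hr
  have hr0 : 0 < r := by positivity
  have hr1 : r < 1 := Real.rpow_lt_one (by norm_num) (by norm_num) hal
  have hLam0 : 0 < Lam * n := by nlinarith only [hBl, mul_pos hBc hlam]
  induction j with
  | zero =>
    intro x hx1 hx2
    have := hbd x (le_antisymm hx2 (by simpa using hx1))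
    simp only [pow_zero]
    linarith
  | succ j ih =>
    intro x hx1 hx2
    set t := t0 * (1 / 2 : ℝ) ^ j with ht
    have htpos : 0 < t := by positivity
    have htt0 : t ≤ t0 := mul_le_of_le_one_right ht0.le (pow_le_one₀ (by norm_num) (by norm_num))
    have hx1' : t / 2 ≤ 1 - ‖x‖ := by
      rw [pow_succ] at hx1; rw [ht]; linarith
    have hx0 : 0 < 1 - ‖x‖ := by linarith
    have hφ := (phi_bounds hBc htB x hx0.le hx2).1
    have hrj0 : 0 < r ^ j := by positivity
    have hrj1 : r ^ j ≤ 1 := pow_le_one₀ hr0.le hr1.le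
    have htal : t ^ al = t0 ^ al * r ^ j := by
      rw [ht, Real.mul_rpow ht0.le (by positivity), hr, ← Real.rpow_natCast, ← Real.rpow_natCast,
        ← Real.rpow_mul (by norm_num), ← Real.rpow_mul (by norm_num), mul_comm al]
    have hφ0 : 0 < phi n Bc x := by linarith
    rw [pow_succ r]
    clear_value r
    rcases le_or_gt t (1 - ‖x‖) with h | h
    · refine le_trans ?_ (ih x h hx2)
      apply mul_le_mul_of_nonneg_right _ hφ0.le
      apply mul_le_mul_of_nonneg_left _ (by positivity)
      have : r ^ j * r ≤ r ^ j := mul_le_of_le_one_right hrj0.le hr1.le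
      linarith
    · have hmj : 0 < m / 2 * (1 + r ^ j) := by positivity
      have hA := hlay t d0 htpos (le_trans (mul_le_mul_of_nonneg_left htt0 (by positivity)) htT)
        (htt0.trans htd) b f u hs hbK (m / 2 * (1 + r ^ j)) hmj
        (hfm.trans (ENNReal.ofReal_le_ofReal (by nlinarith only [hm, hrj0])))
        (fun y hy => ih y hy.ge (by rw [hy]; exact htt0)) x hx0 h
      refine le_trans ?_ hA
      rw [htal]
      have h1 : C * (t * (t0 ^ al * r ^ j)) * (m / 2 * (1 + r ^ j)) ≤
          C * ((2 * phi n Bc x) * (t0 ^ al * r ^ j)) * (m / 2 * 2) := by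
        gcongr
        · linarith
        · linarith
      have h2 : C * ((2 * phi n Bc x) * (t0 ^ al * r ^ j)) * (m / 2 * 2) =
          (4 * C * t0 ^ al) * (phi n Bc x * r ^ j * (m / 2)) := by ring
      have h3 : (4 * C * t0 ^ al) * (phi n Bc x * r ^ j * (m / 2)) ≤
          (1 - r) * (phi n Bc x * r ^ j * (m / 2)) :=
        mul_le_mul_of_nonneg_right hts (by positivity)
      linarith

/-- Growth lemma in the unit ball. -/
theorem growth_lemma_unit_ball
    (n : ℕ) (hn : 2 ≤ n) (lam Lam : ℝ) (hlam : 0 < lam) (hLam : lam ≤ Lam)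
    (p q d0 K ν : ℝ) (hq : (n : ℝ) < q) (hp : (n : ℝ) ≤ p) (hpq : p ≤ q)
    (hd0 : 0 < d0) (hd0' : d0 ≤ 1 / 4) (hK : 0 < K) (hν : 0 < ν) :
    ∃ k a : ℝ, 0 < k ∧ 0 < a ∧
      ∀ b f u : EuclideanSpace ℝ (Fin n) → ℝ,
        ContinuousOn b (Metric.ball 0 1) →
        ContinuousOn f (Metric.ball 0 1) →
        (∀ x ∈ Metric.ball (0 : EuclideanSpace ℝ (Fin n)) 1, 0 ≤ b x) →
        (∀ x ∈ Metric.ball (0 : EuclideanSpace ℝ (Fin n)) 1, 0 ≤ f x) →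
        LpNormE n q b (Metric.ball 0 1) ≤ ENNReal.ofReal K →
        LpNormE n p f (Metric.ball 0 1)
            + LpNormE n q f {x ∈ Metric.ball (0 : EuclideanSpace ℝ (Fin n)) 1 | 1 - ‖x‖ < d0}
          ≤ ENNReal.ofReal a →
        ContDiffOn ℝ 2 u (Metric.ball 0 1) →
        (∀ x ∈ Metric.ball (0 : EuclideanSpace ℝ (Fin n)) 1, 0 ≤ u x) →
        (∀ x ∈ Metric.ball (0 : EuclideanSpace ℝ (Fin n)) 1,
          pucciMinus n lam Lam (hess n u x) - b x * gradNorm n u x ≤ f x) →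
        ENNReal.ofReal ν * volume (Metric.ball (0 : EuclideanSpace ℝ (Fin n)) 1)
            ≤ volume {x ∈ Metric.ball (0 : EuclideanSpace ℝ (Fin n)) 1 | 1 - ‖x‖ ≤ u x} →
        ∀ x ∈ Metric.ball (0 : EuclideanSpace ℝ (Fin n)) 1, k * (1 - ‖x‖) < u x := by
  have hn0 : 0 < n := by omega
  have hnn : (0 : ℝ) < n := by exact_mod_cast hn0
  have hq0 : 0 < q := hnn.trans hq
  have hLam0 : 0 < Lam := hlam.trans_le hLam
  obtain ⟨C, Bc, hC, hBc, hBl, hlay⟩ := hopf_layer hn0 hlam hLam hq hK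
  set al := 1 - (n : ℝ) / q with hal
  have hal0 : 0 < al := by
    have : (n : ℝ) / q < 1 := (div_lt_one hq0).2 hq
    linarith
  clear_value al
  have hr1 : (1 / 2 : ℝ) ^ al < 1 := Real.rpow_lt_one (by norm_num) (by norm_num) hal0
  set s := ((1 - (1 / 2 : ℝ) ^ al) / (4 * C)) ^ (1 / al) with hs
  have hX : 0 < (1 - (1 / 2 : ℝ) ^ al) / (4 * C) := div_pos (by linarith) (by positivity)
  have hs0 : 0 < s := Real.rpow_pos_of_pos hX _
  set t0 := min (min (lam / (8 * (Lam * n))) d0) s with ht0def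
  have ht0 : 0 < t0 := lt_min (lt_min (by positivity) hd0) hs0
  have htT : 8 * (Lam * n) * t0 ≤ lam := by
    have : t0 ≤ lam / (8 * (Lam * n)) := (min_le_left _ _).trans (min_le_left _ _)
    rw [le_div_iff₀ (by positivity)] at this
    linarith
  have htd : t0 ≤ d0 := (min_le_left _ _).trans (min_le_right _ _)
  have hts : 4 * C * t0 ^ al ≤ 1 - (1 / 2 : ℝ) ^ al := by
    have h1 : t0 ^ al ≤ s ^ al := Real.rpow_le_rpow ht0.le (min_le_right _ _) hal0.le
    have h2 : s ^ al = (1 - (1 / 2 : ℝ) ^ al) / (4 * C) := by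
      rw [hs, ← Real.rpow_mul hX.le, one_div_mul_cancel hal0.ne', Real.rpow_one]
    rw [h2, le_div_iff₀ (by positivity)] at h1
    linarith
  have ht14 : t0 ≤ 1 / 4 := htd.trans hd0'
  clear_value t0
  have htB : 4 * Bc * t0 ≤ 1 := by
    by_contra h
    have h1 := mul_lt_mul_of_pos_right (not_le.1 h) hlam
    have h2 : 4 * Bc * t0 * lam = 4 * t0 * (Bc * lam) := by ring
    rw [h2, hBl] at h1
    linarith only [h1, htT]
  obtain ⟨m, a, hm, ha, hintr⟩ := global_interior hn0 hlam hLam (η := t0) hq hp hK hν ht0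
    (by linarith)
  refine ⟨m / 4, min a (m / 2), by positivity, lt_min ha (by positivity), ?_⟩
  intro b f u hb hf hb0 hf0 hbK hfa hu hu0 hpde hmeas x hx
  have hsol : Sol n lam Lam b f u := ⟨hb, hf, hb0, hf0, hu, hu0, hpde⟩
  have hI := hintr b f u hsol hbK
    (le_self_add.trans (hfa.trans (ENNReal.ofReal_le_ofReal (min_le_left _ _)))) hmeas
  rw [mem_ball_zero_iff] at hx
  have hxn := norm_nonneg x
  rcases le_or_gt t0 (1 - ‖x‖) with h | h
  · have := hI x (by linarith)
    nlinarith only [this, hm, hxn]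
  · obtain ⟨j, hj⟩ := exists_pow_lt_of_lt_one (div_pos (sub_pos.2 hx) ht0)
      (show (1 / 2 : ℝ) < 1 by norm_num)
    rw [lt_div_iff₀ ht0] at hj
    have hA := hopf_iter hlam hal0 hC hBc hBl hlay ht0 htT htd hts hsol hbK hm
      (le_add_self.trans (hfa.trans (ENNReal.ofReal_le_ofReal (min_le_right _ _))))
      (fun y hy => by
        have h1 := (phi_bounds hBc htB y (by linarith) hy.le).2.1
        have h2 := hI y (by linarith)
        rw [hy] at h1
        have h3 : m * phi n Bc y ≤ m * 1 := mul_le_mul_of_nonneg_left (by linarith) hm.le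
        linarith) j x (by linarith) h.le
    have hφ := (phi_bounds hBc htB x (by linarith) h.le).1
    have hrj : 0 < ((1 / 2 : ℝ) ^ al) ^ j := by positivity
    have hd : 0 < 1 - ‖x‖ := by linarith
    refine lt_of_lt_of_le ?_ hA
    calc m / 4 * (1 - ‖x‖) < m / 2 * 1 * (1 - ‖x‖) := by nlinarith only [hm, hd, mul_pos hm hd]
      _ ≤ m / 2 * (1 + ((1 / 2 : ℝ) ^ al) ^ j) * phi n Bc x := by
        gcongr
        linarith
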